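/- Conjecture 5.2 of Adem–Ge–Pan–Petrosyan is false: there exist a finite cyclic group G, a finitely generated ℤG-lattice L (i.e., a free abelian group of finite rank with a G-action), and an integer k ≥ 0 such that H^k(L ⋊ G, ℤ) is not isomorphic to the direct sum ⊕_{i+j=k} H^i(G, H^j(L, ℤ)). -/

import Mathlib

open Matrix

namespace Crystal

/-- The lattice `ℤ^n`, written multiplicatively so that it can be a factor of a semidirect
product of groups. -/
abbrev Lat (n : ℕ) : Type := Multiplicative (Fin n → ℤ)

/-- The invertible integer matrix determined by `M` with `M ^ (m + 1) = 1`. -/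
def matUnit {n : ℕ} (M : Matrix (Fin n) (Fin n) ℤ) (m : ℕ) (hm : M ^ (m + 1) = 1) :
    (Matrix (Fin n) (Fin n) ℤ)ˣ :=
  ⟨M, M ^ m, by rw [← pow_succ']; exact hm, by rw [← pow_succ]; exact hm⟩

/-- Linear automorphisms of `ℤ^n` as multiplicative automorphisms of the multiplicative
version of `ℤ^n`. -/
def linToAut (n : ℕ) : ((Fin n → ℤ) ≃ₗ[ℤ] (Fin n → ℤ)) →* MulAut (Lat n) :=
  MonoidHom.mk' (fun e => AddEquiv.toMultiplicative e.toAddEquiv) (fun _ _ => rfl)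

/-- An invertible integer matrix acts on the (multiplicative) lattice `ℤ^n` by (left)
matrix-vector multiplication. -/
def glToAut (n : ℕ) : (Matrix (Fin n) (Fin n) ℤ)ˣ →* MulAut (Lat n) :=
  (linToAut n).comp
    ((LinearMap.GeneralLinearGroup.generalLinearEquiv ℤ (Fin n → ℤ)).toMonoidHom.comp
      (Matrix.GeneralLinearGroup.toLin).toMonoidHom)

/-- The homomorphism from `ℤ/m` (written multiplicatively) to a group `G` sending the
generator `1` to a chosen element `α` satisfying `α ^ m = 1`. -/
def zmodHom {G : Type*} [Group G] (m : ℕ) [NeZero m] (α : G) (hα : α ^ m = 1) :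
    Multiplicative (ZMod m) →* G :=
  MonoidHom.mk' (fun g => α ^ (g.toAdd.val)) (by
    intro a b
    show α ^ (ZMod.val (a.toAdd + b.toAdd)) = α ^ (ZMod.val a.toAdd) * α ^ (ZMod.val b.toAdd)
    rw [ZMod.val_add, ← pow_eq_pow_mod _ hα, pow_add])

/-- The action of `ℤ/q` on the lattice `ℤ^n` in which the generator `1` of `ℤ/q` acts by left
multiplication by the integer matrix `M`; `M` is required to satisfy `M ^ q = 1`. -/
def matAction {n : ℕ} (q : ℕ) [NeZero q] (M : Matrix (Fin n) (Fin n) ℤ)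
    (hq : M ^ q = 1) : Multiplicative (ZMod q) →* MulAut (Lat n) :=
  zmodHom q (glToAut n (matUnit M (q - 1) (by
      rwa [Nat.sub_add_cancel (Nat.one_le_iff_ne_zero.2 (NeZero.ne q))])))
    (by
      rw [← map_pow]
      convert map_one (glToAut n)
      ext i j
      rw [Units.val_pow_eq_pow_val]
      simp [matUnit, hq])

/-- The crystallographic group `ℤ^n ⋊ ℤ/q` in which the generator `1` of `ℤ/q` acts on the
lattice `ℤ^n` by left multiplication by the integer matrix `M` (with `M ^ q = 1`). -/
abbrev Crys {n : ℕ} (q : ℕ) [NeZero q] (M : Matrix (Fin n) (Fin n) ℤ) (hq : M ^ q = 1) : Type :=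
  SemidirectProduct (Lat n) (Multiplicative (ZMod q)) (matAction q M hq)


open CategoryTheory groupCohomology

variable {k : Type} [CommRing k]

lemma comp_contractNth {G H : Type*} [Monoid G] [Monoid H] (f : G →* H) {n : ℕ}
    (j : Fin (n + 1)) (g : Fin (n + 1) → G) (i : Fin n) :
    f (Fin.contractNth j (· * ·) g i) = Fin.contractNth j (· * ·) (fun l => f (g l)) i := by
  rcases lt_trichotomy (i : ℕ) j with h | h | h
  · rw [Fin.contractNth_apply_of_lt _ _ _ _ h, Fin.contractNth_apply_of_lt _ _ _ _ h]
  · rw [Fin.contractNth_apply_of_eq _ _ _ _ h, Fin.contractNth_apply_of_eq _ _ _ _ h,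
      _root_.map_mul]
  · rw [Fin.contractNth_apply_of_gt _ _ _ _ h, Fin.contractNth_apply_of_gt _ _ _ _ h]

/-- The map of inhomogeneous cochain complexes induced (contravariantly in the group,
covariantly in the coefficients) by a group homomorphism `f : H →* G` together with a
compatible linear map `τ : A → B` of coefficients. -/
def cochainsMap {G H : Type} [Group G] [Group H] (A : Rep k G) (B : Rep k H)
    (f : H →* G) (τ : A →ₗ[k] B)
    (hcomp : ∀ (h : H) (a : A), τ (A.ρ (f h) a) = B.ρ h (τ a)) :
    inhomogeneousCochains A ⟶ inhomogeneousCochains B where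
  f n := ModuleCat.ofHom
    { toFun := fun F v => τ (F (fun i => f (v i)))
      map_add' := fun x y => by funext v; simp
      map_smul' := fun r x => by funext v; simp }
  comm' i j hij := by
    have hij' : i + 1 = j := hij
    subst hij'
    rw [inhomogeneousCochains.d_def, inhomogeneousCochains.d_def]
    ext F v
    simp only [ModuleCat.hom_comp, LinearMap.comp_apply]
    show (inhomogeneousCochains.d B i).hom (fun w => τ (F (fun l => f (w l)))) v
      = τ ((inhomogeneousCochains.d A i).hom F (fun l => f (v l)))
    simp only [inhomogeneousCochains.d_hom_apply, map_add, map_sum, _root_.map_smul]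
    congr 1
    · exact (hcomp (v 0) _).symm
    · refine Finset.sum_congr rfl fun j' _ => ?_
      have hc : (fun l => f (j'.contractNth (· * ·) v l))
          = j'.contractNth (· * ·) (fun l => f (v l)) := by
        funext l
        exact comp_contractNth f j' v l
      rw [hc]

lemma cochainsMap_eq_id {G : Type} [Group G] (A : Rep k G) (f : G →* G) (τ : A →ₗ[k] A)
    (hcomp : ∀ (h : G) (a : A), τ (A.ρ (f h) a) = A.ρ h (τ a))
    (hf : ∀ x, f x = x) (hτ : ∀ a, τ a = a) :
    cochainsMap A A f τ hcomp = 𝟙 _ := by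
  apply HomologicalComplex.Hom.ext
  funext n
  ext F v
  show τ (F (fun i => f (v i))) = F v
  simp only [hf, hτ]

lemma cochainsMap_comp {G H K : Type} [Group G] [Group H] [Group K]
    (A : Rep k G) (B : Rep k H) (C : Rep k K)
    (f₁ : H →* G) (τ₁ : A →ₗ[k] B) (h₁ : ∀ (h : H) (a : A), τ₁ (A.ρ (f₁ h) a) = B.ρ h (τ₁ a))
    (f₂ : K →* H) (τ₂ : B →ₗ[k] C) (h₂ : ∀ (h : K) (a : B), τ₂ (B.ρ (f₂ h) a) = C.ρ h (τ₂ a))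
    (f₃ : K →* G) (τ₃ : A →ₗ[k] C) (h₃ : ∀ (h : K) (a : A), τ₃ (A.ρ (f₃ h) a) = C.ρ h (τ₃ a))
    (hf : ∀ x, f₁ (f₂ x) = f₃ x) (hτ : ∀ a, τ₂ (τ₁ a) = τ₃ a) :
    cochainsMap A B f₁ τ₁ h₁ ≫ cochainsMap B C f₂ τ₂ h₂ = cochainsMap A C f₃ τ₃ h₃ := by
  apply HomologicalComplex.Hom.ext
  funext n
  ext F v
  show τ₂ (τ₁ (F (fun i => f₁ (f₂ (v i))))) = τ₃ (F (fun i => f₃ (v i)))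
  simp only [hf]
  exact hτ _

/-- Given an action `φ` of a group `G` on a group `L` and a representation `ψ` of `G` on a
`k`-module `V`, this is `H^j(L, V)` (with `L` acting trivially on the coefficients `V`),
endowed with the `G`-action functorially induced by the action of `G` on `L` and on `V`:
`g` acts via the conjugation automorphism `φ g⁻¹` of `L` and via `ψ g` on `V`. -/
noncomputable def cohRep {G L V : Type} [Group G] [Group L] [AddCommGroup V] [Module k V]
    (φ : G →* MulAut L) (ψ : Representation k G V) (j : ℕ) : Rep k G :=
  Rep.of (X := groupCohomology (Rep.trivial k L V) j)
    { toFun := fun g => ModuleCat.Hom.hom (HomologicalComplex.homologyMap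
        (cochainsMap (Rep.trivial k L V) (Rep.trivial k L V) (φ g⁻¹).toMonoidHom (ψ g)
          (fun _ _ => rfl)) j)
      map_one' := by
        have h := cochainsMap_eq_id (Rep.trivial k L V) (φ 1⁻¹).toMonoidHom (ψ 1)
          (fun _ _ => rfl) (fun x => by simp) (fun a => by simp)
        rw [h]
        exact congrArg ModuleCat.Hom.hom (HomologicalComplex.homologyMap_id _ j)
      map_mul' := fun g₁ g₂ => by
        have h := cochainsMap_comp (Rep.trivial k L V) (Rep.trivial k L V) (Rep.trivial k L V)
          (φ g₂⁻¹).toMonoidHom (ψ g₂) (fun _ _ => rfl)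
          (φ g₁⁻¹).toMonoidHom (ψ g₁) (fun _ _ => rfl)
          (φ (g₁ * g₂)⁻¹).toMonoidHom (ψ (g₁ * g₂)) (fun _ _ => rfl)
          (fun x => by simp [_root_.mul_inv_rev]) (fun a => by simp)
        rw [← h, HomologicalComplex.homologyMap_comp]
        rfl }


/-- `H^i(G, H^j(L, ℤ))`: the `i`-th cohomology of the cyclic group `ℤ/q` with coefficients in
the `j`-th cohomology of the lattice `ℤ^n` (with trivial `ℤ` coefficients), where the
`ℤ/q`-action on `H^j(ℤ^n, ℤ)` is the one functorially induced by the matrix action on the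
lattice. -/
noncomputable abbrev cohOfCoh {n : ℕ} (q : ℕ) [NeZero q] (M : Matrix (Fin n) (Fin n) ℤ)
    (hq : M ^ q = 1) (i j : ℕ) : ModuleCat ℤ :=
  groupCohomology
    (cohRep (matAction q M hq) (1 : Representation ℤ (Multiplicative (ZMod q)) ℤ) j) i

/-- `H^k(Γ, ℤ)` for `Γ = ℤ^n ⋊ ℤ/q`, with trivial coefficients `ℤ`. -/
noncomputable abbrev cohCrys {n : ℕ} (q : ℕ) [NeZero q] (M : Matrix (Fin n) (Fin n) ℤ)
    (hq : M ^ q = 1) (k : ℕ) : ModuleCat ℤ :=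
  groupCohomology (Rep.trivial ℤ (Crys q M hq) ℤ) k

end Crystal

open CategoryTheory

/-!
Let `G` be cyclic of finite order with generator `g`, let `Γ = L ⋊ G`, and let `F` be the module of
functions `G → ℤ`. By Shapiro's lemma `Hʲ(L, ℤ) = Hʲ(Γ, F)`, equivariantly for the left translation
action of `G` on `F`. With `F₀ ⊆ F` the functions of sum zero, the long exact sequences of
`0 → ℤ → F → F₀ → 0` (constants, `g - 1`) and `0 → F₀ → F → ℤ → 0` (inclusion, sum) bound the order
of the torsion of `Hᵏ(Γ, ℤ)` by the product of those of `Hⁱ(G, Hʲ(L, ℤ))` over `i + j = k`. The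
bound is strict for `k = n + 2` as soon as there are an `(n + 1)`-cocycle `c` and an `n`-cochain `b`
on `L` with `db = g c - c` such that the class of the norm of `b` is not a norm in `Hⁿ(L, ℤ)`; this
says that a differential `d₂` of the Lyndon–Hochschild–Serre spectral sequence is nonzero.

The example has `G = ℤ/4`, `L = P ⊕ P*` with `P` of rank three, and `n = 2`. Alternating a
`2`-cocycle and evaluating on the canonical invariant element of `P ⊗ P*` gives a multiple of `4` on
the norm of any cocycle, but gives `2` on the norm of `b`.
-/

namespace AGPP

open groupCohomology
open Finset.HasAntidiagonal (antidiagonal)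

section Index

variable {A B C : Type*} [AddCommGroup A] [AddCommGroup B] [AddCommGroup C]

lemma index_dvd_relIndex_mul_relIndex_ker (κ : A →+ B) (P : AddSubgroup A) {K : AddSubgroup B}
    (hK : κ.range ≤ K) : P.index ∣ (P.map κ).relIndex K * P.relIndex κ.ker := by
  have hindex : P.index = P.relIndex κ.ker * (P.map κ).relIndex κ.range := by
    rw [← AddSubgroup.relIndex_sup_left κ.ker P, ← AddSubgroup.index_comap,
      AddSubgroup.comap_map_eq, sup_comm P, AddSubgroup.relIndex_mul_index le_sup_right]
  rw [hindex, mul_comm, ← AddSubgroup.relIndex_mul_relIndex _ _ _ (P.map_le_range κ) hK]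
  exact mul_dvd_mul_right (dvd_mul_right _ _) _

lemma index_dvd_relIndex_mul_index_comap {d : C →+ A} {κ : A →+ B} (h : Function.Exact d κ)
    (P : AddSubgroup A) {K : AddSubgroup B} (hK : κ.range ≤ K) :
    P.index ∣ (P.map κ).relIndex K * (P.comap d).index := by
  rw [AddSubgroup.index_comap, ← h.addMonoidHom_ker_eq]
  exact index_dvd_relIndex_mul_relIndex_ker κ P hK

lemma card_torsion_dvd_mul_card_ker (f : A →+ B) :
    Nat.card (AddCommGroup.torsion A) ∣ Nat.card (AddCommGroup.torsion B) * Nat.card f.ker := by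
  let φ : AddCommGroup.torsion A →+ AddCommGroup.torsion B :=
    (f.comp (AddCommGroup.torsion A).subtype).codRestrict _ fun x => f.isOfFinAddOrder x.2
  have hker : φ.ker.map (AddCommGroup.torsion A).subtype ≤ f.ker := by
    rintro _ ⟨x, hx, rfl⟩
    exact congrArg Subtype.val hx
  have hcard : Nat.card φ.ker ∣ Nat.card f.ker := by
    rw [← AddSubgroup.card_map_of_injective (AddCommGroup.torsion A).subtype_injective]
    exact AddSubgroup.card_dvd_of_le hker
  rw [← AddSubgroup.card_mul_index φ.ker, AddSubgroup.index_ker, mul_comm]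
  exact mul_dvd_mul (AddSubgroup.card_addSubgroup_dvd_card φ.range) hcard

end Index

section CocycleClass

variable {k : Type} [CommRing k] {Γ Δ Ξ : Type} [Group Γ] [Group Δ] [Group Ξ]
  {A : Rep.{0} k Γ} {B : Rep.{0} k Δ} {C : Rep.{0} k Ξ} {n : ℕ}

/-- The class in `Hⁿ(Γ, A)` of an inhomogeneous `n`-cocycle. -/
noncomputable def cocycleClass (f : (Fin n → Γ) → A) (hf : inhomogeneousCochains.d A n f = 0) :
    groupCohomology A n :=
  π A n (cocyclesMk f hf)

lemma iCocycles_injective (A : Rep.{0} k Γ) (n : ℕ) : Function.Injective (iCocycles A n) :=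
  (ModuleCat.mono_iff_injective _).1 inferInstance

lemma exists_cocycleClass_eq (x : groupCohomology A n) : ∃ f hf, cocycleClass f hf = x := by
  induction x using groupCohomology_induction_on with | _ z
  have hz : inhomogeneousCochains.d A n (iCocycles A n z) = 0 := by
    simpa using! congr($((inhomogeneousCochains A).iCycles_d n (n + 1)) z)
  refine ⟨iCocycles A n z, hz, congrArg (π A n) (iCocycles_injective A n ?_)⟩
  rw [iCocycles_mk _ hz]

lemma iCocycles_toCocycles (g : (Fin n → Γ) → A) :
    iCocycles A (n + 1) (toCocycles A n (n + 1) g) = inhomogeneousCochains.d A n g := by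
  have := congr($((inhomogeneousCochains A).toCycles_i n (n + 1)) g)
  rwa [inhomogeneousCochains.d_def] at this

lemma cocycleClass_eq_iff {f f' : (Fin (n + 1) → Γ) → A} (hf : inhomogeneousCochains.d A _ f = 0)
    (hf' : inhomogeneousCochains.d A _ f' = 0) :
    cocycleClass f hf = cocycleClass f' hf' ↔ ∃ b, inhomogeneousCochains.d A n b = f - f' := by
  have hexact : Function.Exact (toCocycles A n (n + 1)) (π A (n + 1)) :=
    (ShortComplex.ShortExact.moduleCat_exact_iff_function_exact _).1
      (ShortComplex.exact_of_g_is_cokernel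
        (.mk _ _ ((inhomogeneousCochains A).toCycles_comp_homologyπ n (n + 1)))
        ((inhomogeneousCochains A).homologyIsCokernel n (n + 1) (by simp)))
  rw [← sub_eq_zero, cocycleClass, cocycleClass, ← map_sub, hexact]
  refine exists_congr fun b => ?_
  rw [← (iCocycles_injective A (n + 1)).eq_iff, iCocycles_toCocycles, map_sub, iCocycles_mk _ hf,
    iCocycles_mk _ hf']

/-- The map on group cohomology induced by a map of complexes of inhomogeneous cochains. -/
noncomputable def cohomologyMap (F : inhomogeneousCochains A ⟶ inhomogeneousCochains B) (n : ℕ) :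
    groupCohomology A n ⟶ groupCohomology B n :=
  HomologicalComplex.homologyMap F n

lemma d_chainMap_apply (F : inhomogeneousCochains A ⟶ inhomogeneousCochains B)
    (f : (Fin n → Γ) → A) :
    inhomogeneousCochains.d B n (F.f n f) = F.f (n + 1) (inhomogeneousCochains.d A n f) := by
  simpa using! congr($(F.comm n (n + 1)) f)

lemma cohomologyMap_cocycleClass (F : inhomogeneousCochains A ⟶ inhomogeneousCochains B)
    (f : (Fin n → Γ) → A) (hf : inhomogeneousCochains.d A n f = 0) :
    cohomologyMap F n (cocycleClass f hf) =
      cocycleClass (F.f n f) (by rw [d_chainMap_apply, hf]; exact map_zero _) := by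
  refine (congr($(HomologicalComplex.homologyπ_naturality F n) (cocyclesMk f hf))).trans
    (congrArg (π B n) (iCocycles_injective B n ?_))
  rw [iCocycles_mk]
  exact (congr($(HomologicalComplex.cyclesMap_i F n) (cocyclesMk f hf))).trans
    (congrArg (F.f n) (iCocycles_mk f hf))

@[simp]
lemma cohomologyMap_id : cohomologyMap (𝟙 (inhomogeneousCochains A)) n = 𝟙 _ :=
  HomologicalComplex.homologyMap_id _ n

lemma cohomologyMap_comp (F : inhomogeneousCochains A ⟶ inhomogeneousCochains B)
    (F' : inhomogeneousCochains B ⟶ inhomogeneousCochains C) :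
    cohomologyMap (F ≫ F') n = cohomologyMap F n ≫ cohomologyMap F' n :=
  HomologicalComplex.homologyMap_comp F F' n

lemma cohomologyMap_sub (F F' : inhomogeneousCochains A ⟶ inhomogeneousCochains B) :
    cohomologyMap (F - F') n = cohomologyMap F n - cohomologyMap F' n :=
  HomologicalComplex.homologyMap_sub F F' n

lemma cohomologyMap_sum {ι : Type*} (s : Finset ι)
    (F : ι → (inhomogeneousCochains A ⟶ inhomogeneousCochains B)) :
    cohomologyMap (∑ i ∈ s, F i) n = ∑ i ∈ s, cohomologyMap (F i) n :=
  (HomologicalComplex.homologyFunctor (ModuleCat k) (.up ℕ) n).map_sum F s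

end CocycleClass

section LongExactSequence

variable {k : Type} [CommRing k] {Γ : Type} [Group Γ]

lemma shortExact_of_function_exact {X : ShortComplex (Rep.{0} k Γ)}
    (hf : Function.Injective X.f.hom) (hg : Function.Surjective X.g.hom)
    (hfg : Function.Exact X.f.hom X.g.hom) : X.ShortExact := by
  have := (Rep.mono_iff_injective X.f).2 hf
  have := (Rep.epi_iff_surjective X.g).2 hg
  refine { exact := (X.exact_map_iff_of_faithful (forget₂ (Rep.{0} k Γ) (ModuleCat.{0} k))).1 ?_ }
  exact (ShortComplex.ShortExact.moduleCat_exact_iff_function_exact _).2 hfg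

variable {X : ShortComplex (Rep.{0} k Γ)} (hX : X.ShortExact) (n : ℕ)

lemma exact_δ_map :
    Function.Exact (δ hX n (n + 1) rfl) (map (MonoidHom.id Γ) X.f (n + 1)) :=
  (ShortComplex.ShortExact.moduleCat_exact_iff_function_exact _).1 (mapShortComplex₁_exact hX rfl)

lemma exact_map_δ :
    Function.Exact (map (MonoidHom.id Γ) X.g n) (δ hX n (n + 1) rfl) :=
  (ShortComplex.ShortExact.moduleCat_exact_iff_function_exact _).1 (mapShortComplex₃_exact hX rfl)

end LongExactSequence

section Shapiro

variable {G L : Type} [Group G] [Group L] (φ : G →* MulAut L) (k : Type) [CommRing k]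

/-- The representation of `L ⋊ G` on the functions `G → k`, acting by right translation through
the quotient `G`; it is coinduced from the trivial representation of `L`. -/
noncomputable def funRep : Rep.{0} k (L ⋊[φ] G) :=
  Rep.of (X := G → k)
    { toFun := fun γ => LinearMap.funLeft k k (· * γ.right)
      map_one' := by ext; simp
      map_mul' := fun _ _ => by ext; simp [mul_assoc] }

/-- Left translation `w ↦ w (h⁻¹ * ·)` by `h : G`, which commutes with the action of `L ⋊ G`. -/
noncomputable def leftTranslation (h : G) : funRep φ k ⟶ funRep φ k :=
  Rep.ofHom ⟨LinearMap.funLeft k k (h⁻¹ * ·), fun γ => by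
    ext; simp [LinearMap.funLeft, mul_assoc]⟩

lemma leftTranslation_one : leftTranslation φ k 1 = 𝟙 (funRep φ k) := by
  ext w
  exact funext fun x => congrArg (w : G → k) (by simp)

lemma leftTranslation_mul (h₁ h₂ : G) :
    leftTranslation φ k (h₁ * h₂) = leftTranslation φ k h₂ ≫ leftTranslation φ k h₁ := by
  ext w
  exact funext fun x => congrArg (w : G → k) (by simp [mul_assoc])

/-- The identification of `funRep` with the representation coinduced from the trivial
representation of `L ≤ L ⋊ G`. -/
noncomputable def funRepIsoCoind :
    funRep φ k ≅ Rep.coind (SemidirectProduct.inl (φ := φ)).range.subtype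
      (Rep.trivial k (SemidirectProduct.inl (φ := φ)).range k) :=
  Rep.mkIso (.mk
    { toFun := fun w => ⟨fun γ => w γ.right, by rintro ⟨_, l, rfl⟩ γ; simp⟩
      invFun := fun f x => f.1 (SemidirectProduct.inr x)
      map_add' := fun _ _ => rfl
      map_smul' := fun _ _ => rfl
      left_inv := fun _ => rfl
      right_inv := fun f => Subtype.ext (funext fun γ => by
        have h := f.2 ⟨SemidirectProduct.inl γ.left, ⟨_, rfl⟩⟩ (SemidirectProduct.inr γ.right)
        exact h.symm.trans (congrArg f.1 (SemidirectProduct.inl_left_mul_inr_right γ))) }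
    fun _ => rfl)

/-- Shapiro's lemma for `L ≤ L ⋊ G`, without control over the action of `G`. -/
noncomputable def shapiroIso (n : ℕ) :
    groupCohomology (Rep.trivial k L k) n ≅ groupCohomology (funRep φ k) n :=
  groupCohomology.mapIso (MonoidHom.ofInjective (SemidirectProduct.inl_injective (φ := φ)))
      (.refl k k) (fun _ => rfl) n ≪≫
    (coindIso _ n).symm ≪≫ (groupCohomology.functor k _ n).mapIso (funRepIsoCoind φ k).symm

variable {φ} in
/-- The tuple `(g v₀ ⋯ vᵢ₋₁) · left vᵢ` of elements of `L`. Pulling back along it is an explicit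
inverse on cochains of restricting to `L` and evaluating at `1`. -/
def shear {n : ℕ} (g : G) (v : Fin n → L ⋊[φ] G) : Fin n → L := fun i =>
  φ (g * Fin.partialProd (fun l => (v l).right) i.castSucc) (v i).left

lemma shear_tail {n : ℕ} (g : G) (v : Fin (n + 1) → L ⋊[φ] G) :
    shear (g * (v 0).right) (fun i => v i.succ) = fun i => shear g v i.succ := by
  funext i
  rw [shear, shear, ← Fin.succ_castSucc, Fin.partialProd_succ', mul_assoc]
  rfl

lemma shear_contractNth {n : ℕ} (g : G) (v : Fin (n + 1) → L ⋊[φ] G) (j : Fin (n + 1)) :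
    shear g (Fin.contractNth j (· * ·) v) = Fin.contractNth j (· * ·) (shear g v) := by
  funext i
  have hright : (fun l => (Fin.contractNth j (· * ·) v l).right) =
      Fin.contractNth j (· * ·) (fun l => (v l).right) :=
    funext (Crystal.comp_contractNth (SemidirectProduct.rightHom (φ := φ)) j v)
  rw [shear, hright, Fin.partialProd_contractNth, Function.comp_apply]
  rcases lt_trichotomy (i : ℕ) j with h | h | h
  · rw [Fin.contractNth_apply_of_lt _ _ _ _ h, Fin.contractNth_apply_of_lt _ _ _ _ h,
      Fin.succAbove_of_castSucc_lt _ _ (by simp [Fin.lt_def]; omega), shear]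
  · rw [Fin.contractNth_apply_of_eq _ _ _ _ h, Fin.contractNth_apply_of_eq _ _ _ _ h,
      Fin.succAbove_of_castSucc_lt _ _ (by simp [Fin.lt_def]; omega), shear, shear,
      SemidirectProduct.mul_left, map_mul, ← MulAut.mul_apply, ← map_mul, mul_assoc,
      ← Fin.succ_castSucc, Fin.partialProd_succ]
  · rw [Fin.contractNth_apply_of_gt _ _ _ _ h, Fin.contractNth_apply_of_gt _ _ _ _ h,
      Fin.succAbove_of_le_castSucc _ _ (by simp [Fin.le_def]; omega), shear, Fin.succ_castSucc]

lemma shear_inv_mul {n : ℕ} (h g : G) (v : Fin n → L ⋊[φ] G) :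
    shear (h⁻¹ * g) v = fun i => φ h⁻¹ (shear g v i) := by
  funext i
  rw [shear, shear, ← MulAut.mul_apply, ← map_mul, mul_assoc]

lemma shear_one_inl {n : ℕ} (v : Fin n → L) :
    shear 1 (fun i => SemidirectProduct.inl (φ := φ) (v i)) = v := by
  have hprod : Fin.partialProd (fun _ : Fin n => (1 : G)) = 1 := by
    funext i
    simp [Fin.partialProd]
  funext i
  simp [shear, hprod]

/-- The chain map sending a cochain `F` on `L` to `v ↦ (g ↦ F (shear g v))`. -/
noncomputable def shearMap :
    inhomogeneousCochains (Rep.trivial k L k) ⟶ inhomogeneousCochains (funRep φ k) where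
  f n := ModuleCat.ofHom
    { toFun := fun F v g => F (shear g v)
      map_add' := fun _ _ => rfl
      map_smul' := fun _ _ => rfl }
  comm' i j hij := by
    obtain rfl : i + 1 = j := hij
    rw [inhomogeneousCochains.d_def, inhomogeneousCochains.d_def]
    refine ModuleCat.hom_ext (LinearMap.ext fun F => funext fun v => funext fun g => ?_)
    change (inhomogeneousCochains.d (funRep φ k) i (fun w g => F (shear g w)) v : G → k) g =
      inhomogeneousCochains.d (Rep.trivial k L k) i F (shear g v)
    simp only [inhomogeneousCochains.d_hom_apply]
    refine (Pi.add_apply (M := fun _ => k) _ _ g).trans (congrArg₂ (· + ·) ?_ ?_)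
    · exact congrArg F (shear_tail φ g v)
    · refine (Finset.sum_apply (M := fun _ => k) g _ _).trans (Finset.sum_congr rfl fun l _ => ?_)
      exact congrArg (fun w => (-1 : k) ^ ((l : ℕ) + 1) • F w) (shear_contractNth φ g v l)

/-- Restriction of cochains to `L`, followed by evaluation of functions on `G` at `1`. -/
noncomputable def restrictEval :
    inhomogeneousCochains (funRep φ k) ⟶ inhomogeneousCochains (Rep.trivial k L k) :=
  Crystal.cochainsMap (funRep φ k) (Rep.trivial k L k) SemidirectProduct.inl
    (LinearMap.proj (φ := fun _ : G => k) 1) (fun _ w => congrArg (w : G → k) (mul_one 1))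

lemma shearMap_comp_restrictEval : shearMap φ k ≫ restrictEval φ k = 𝟙 _ :=
  HomologicalComplex.hom_ext _ _ fun _ => ModuleCat.hom_ext (LinearMap.ext fun F =>
    funext fun v => congrArg F (shear_one_inl φ v))

lemma restrictEval_shearMap_apply {n : ℕ} (x : groupCohomology (Rep.trivial k L k) n) :
    cohomologyMap (restrictEval φ k) n (cohomologyMap (shearMap φ k) n x) = x := by
  rw [← ModuleCat.comp_apply, ← cohomologyMap_comp, shearMap_comp_restrictEval, cohomologyMap_id,
    ModuleCat.id_apply]

/- Shapiro's lemma makes `restrictEval` a surjective endomorphism of a Noetherian module, hence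
injective. -/
theorem shearMap_bijective [IsNoetherianRing k] (n : ℕ)
    [Module.Finite k (groupCohomology (Rep.trivial k L k) n)] :
    Function.Bijective (cohomologyMap (shearMap φ k) n) := by
  set r := (cohomologyMap (restrictEval φ k) n).hom
  let e := (shapiroIso φ k n).toLinearEquiv
  have hr : Function.RightInverse (cohomologyMap (shearMap φ k) n) r :=
    restrictEval_shearMap_apply φ k
  have hre : Function.Injective (r ∘ₗ e.toLinearMap) :=
    IsNoetherian.injective_of_surjective_endomorphism _ (hr.surjective.comp e.surjective)
  have hrinj : Function.Injective r := by
    rw [← Function.Injective.of_comp_iff' r e.bijective]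
    exact hre
  exact ⟨hr.injective, (hr.leftInverse_of_injective hrinj).surjective⟩

/-- The action of `h : G` on the cochains of `L` that induces `Crystal.cohRep`. -/
noncomputable def cochainsAct (h : G) :
    inhomogeneousCochains (Rep.trivial k L k) ⟶ inhomogeneousCochains (Rep.trivial k L k) :=
  Crystal.cochainsMap (Rep.trivial k L k) (Rep.trivial k L k) (φ h⁻¹).toMonoidHom
    ((1 : Representation k G k) h) (fun _ _ => rfl)

lemma cochainsAct_mul (h₁ h₂ : G) :
    cochainsAct φ k (h₁ * h₂) = cochainsAct φ k h₂ ≫ cochainsAct φ k h₁ :=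
  HomologicalComplex.hom_ext _ _ fun _ => ModuleCat.hom_ext (LinearMap.ext fun F =>
    funext fun v => congrArg F (funext fun i => by simp))

lemma cochainsAct_comp_shearMap (h : G) :
    cochainsAct φ k h ≫ shearMap φ k =
      shearMap φ k ≫ cochainsMap (MonoidHom.id _) (leftTranslation φ k h) :=
  HomologicalComplex.hom_ext _ _ fun _ => ModuleCat.hom_ext (LinearMap.ext fun F =>
    funext fun v => funext fun g => congrArg F (shear_inv_mul φ h g v).symm)

/-- `Hⁿ(L ⋊ G, funRep)` as a representation of `G` by left translation. -/
noncomputable def funCohRep (n : ℕ) : Rep.{0} k G :=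
  Rep.of (X := groupCohomology (funRep φ k) n)
    { toFun := fun h => (groupCohomology.map (MonoidHom.id _) (leftTranslation φ k h) n).hom
      map_one' := by rw [leftTranslation_one, groupCohomology.map_id]; rfl
      map_mul' := fun _ _ => by rw [leftTranslation_mul, map_id_comp]; rfl }

theorem nonempty_cohRep_iso_funCohRep [IsNoetherianRing k] (n : ℕ)
    [Module.Finite k (groupCohomology (Rep.trivial k L k) n)] :
    Nonempty (Crystal.cohRep φ (1 : Representation k G k) n ≅ funCohRep φ k n) := by
  refine ⟨Rep.mkIso (.mk (.ofBijective _ (shearMap_bijective φ k n)) fun h => ?_)⟩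
  exact congrArg ModuleCat.Hom.hom
    ((cohomologyMap_comp (cochainsAct φ k h) (shearMap φ k)).symm.trans
      ((congrArg (cohomologyMap · n) (cochainsAct_comp_shearMap φ k h)).trans
        (cohomologyMap_comp _ _)))

end Shapiro

section ConstFunctions

variable {G L : Type} [Group G] [Group L] (φ : G →* MulAut L) (k : Type) [CommRing k]

/-- The inclusion of the trivial representation as the constant functions. -/
noncomputable def constHom : Rep.trivial k (L ⋊[φ] G) k ⟶ funRep φ k :=
  Rep.ofHom ⟨LinearMap.pi fun _ => LinearMap.id, fun _ => rfl⟩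

lemma constHom_injective : Function.Injective (constHom φ k).hom :=
  fun _ _ h => congrFun h (1 : G)

lemma constHom_comp_leftTranslation_sub_id (h : G) :
    constHom φ k ≫ (leftTranslation φ k h - 𝟙 _) = 0 := by
  refine Rep.hom_ext (Representation.IntertwiningMap.ext (LinearMap.ext fun c => ?_))
  exact funext fun _ => sub_self c

lemma exact_constHom_leftTranslation_sub_id {g : G} (hg : ∀ x, x ∈ Subgroup.zpowers g) :
    Function.Exact (constHom φ k).hom (leftTranslation φ k g - 𝟙 _).hom := by
  refine fun w => ⟨fun hw => ?_, ?_⟩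
  · have hstep (x : G) : (w : G → k) (g⁻¹ * x) = (w : G → k) x :=
      sub_eq_zero.1 (congrFun hw x)
    have hpow (n : ℤ) (x : G) : (w : G → k) (g ^ n * x) = (w : G → k) x := by
      induction n generalizing x with
      | zero => simp
      | succ n ih => rw [_root_.zpow_add_one, mul_assoc, ih, ← hstep, inv_mul_cancel_left]
      | pred n ih => rw [_root_.zpow_sub_one, mul_assoc, ih, hstep]
    refine ⟨(w : G → k) 1, funext fun x => ?_⟩
    obtain ⟨n, rfl⟩ := hg x
    exact ((congrArg (w : G → k) (mul_one _)).symm.trans (hpow n 1)).symm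
  · rintro ⟨c, rfl⟩
    exact funext fun _ => sub_self c

end ConstFunctions

section InfiniteCyclic

lemma exists_forall_add_one_sub_eq {M : Type*} [AddCommGroup M] (γ : ℤ → M) :
    ∃ F : ℤ → M, ∀ x, F (x + 1) - F x = γ x := by
  refine ⟨fun
    | .ofNat n => ∑ i ∈ Finset.range n, γ i
    | .negSucc n => -∑ i ∈ Finset.range (n + 1), γ (.negSucc i), ?_⟩
  rintro (n | _ | n)
  · change ∑ i ∈ Finset.range (n + 1), γ i - ∑ i ∈ Finset.range n, γ i = _
    rw [Finset.sum_range_succ, add_sub_cancel_left]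
    rfl
  · change ∑ i ∈ Finset.range 0, γ i - -∑ i ∈ Finset.range 1, γ (.negSucc i) = _
    simp
  · change -∑ i ∈ Finset.range (n + 1), γ (.negSucc i) -
      -∑ i ∈ Finset.range (n + 2), γ (.negSucc i) = _
    rw [Finset.sum_range_succ _ (n + 1), neg_sub_neg, add_sub_cancel_left]

variable {L : Type} [Group L] (φ : Multiplicative ℤ →* MulAut L) (k : Type) [CommRing k]

lemma leftTranslation_sub_id_surjective :
    Function.Surjective (leftTranslation φ k (.ofAdd 1) - 𝟙 _).hom := by
  intro w
  obtain ⟨F, hF⟩ := exists_forall_add_one_sub_eq fun x : ℤ => -(w : _ → k) (.ofAdd (x + 1))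
  refine ⟨fun x => F x.toAdd, funext fun x => ?_⟩
  change F (-1 + x.toAdd) - F x.toAdd = w x
  have h := hF (-1 + x.toAdd)
  rw [neg_add_cancel_comm] at h
  rw [← neg_sub, h, neg_neg]
  rfl

lemma int_mem_zpowers_ofAdd_one (x : Multiplicative ℤ) :
    x ∈ Subgroup.zpowers (Multiplicative.ofAdd (1 : ℤ)) :=
  ⟨x.toAdd, by simp [← ofAdd_zsmul]⟩

lemma shortExact_constHom_leftTranslation_sub_id :
    (ShortComplex.mk _ _
      (constHom_comp_leftTranslation_sub_id φ k (Multiplicative.ofAdd 1))).ShortExact :=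
  shortExact_of_function_exact (constHom_injective φ k) (leftTranslation_sub_id_surjective φ k)
    (exact_constHom_leftTranslation_sub_id φ k int_mem_zpowers_ofAdd_one)

theorem finite_groupCohomology_semidirectProduct_int [IsNoetherianRing k]
    (hL : ∀ n, Module.Finite k (groupCohomology (Rep.trivial k L k) n)) (n : ℕ) :
    Module.Finite k (groupCohomology (Rep.trivial k (L ⋊[φ] Multiplicative ℤ) k) n) := by
  have hfun (n : ℕ) : Module.Finite k (groupCohomology (funRep φ k) n) :=
    Module.Finite.equiv (shapiroIso φ k n).toLinearEquiv
  cases n with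
  | zero =>
    have := (Rep.mono_iff_injective (constHom φ k)).2 (constHom_injective φ k)
    exact Module.Finite.of_injective (groupCohomology.map (MonoidHom.id _) (constHom φ k) 0).hom
      ((ModuleCat.mono_iff_injective _).1 inferInstance)
  | succ n =>
    have := isNoetherian_of_range_eq_ker _ _ (LinearMap.exact_iff.1
      (exact_δ_map (shortExact_constHom_leftTranslation_sub_id φ k) n)).symm
    infer_instance

end InfiniteCyclic

section Lattice

theorem finite_groupCohomology_lat (k : Type) [CommRing k] [IsNoetherianRing k] (n j : ℕ) :
    Module.Finite k (groupCohomology (Rep.trivial k (Crystal.Lat n) k) j) := by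
  induction n generalizing j with
  | zero =>
    cases j with
    | zero => exact Module.Finite.equiv (H0Iso (Rep.trivial k (Crystal.Lat 0) k)).toLinearEquiv.symm
    | succ j =>
      have := ModuleCat.subsingleton_of_isZero
        (isZero_groupCohomology_succ_of_subsingleton (Rep.trivial k (Crystal.Lat 0) k) j)
      infer_instance
  | succ n ih =>
    let e : Crystal.Lat (n + 1) ≃* Crystal.Lat n ⋊[1] Multiplicative ℤ :=
      ((Fin.consLinearEquiv ℤ fun _ => ℤ).symm.toAddEquiv.toMultiplicative.trans
        (MulEquiv.prodMultiplicative _ _)).trans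
        (MulEquiv.prodComm.trans SemidirectProduct.mulEquivProd.symm)
    have := finite_groupCohomology_semidirectProduct_int 1 k ih j
    exact Module.Finite.equiv (groupCohomology.mapIso
      (B := Rep.trivial k (Crystal.Lat n ⋊[1] Multiplicative ℤ) k) e.symm (.refl k k)
      (fun _ => rfl) j).toLinearEquiv

end Lattice

section FiniteCyclic

lemma card_homology_eq_relIndex {k : Type} [CommRing k] (S : ShortComplex (ModuleCat k)) :
    Nat.card S.homology =
      S.f.hom.toAddMonoidHom.range.relIndex S.g.hom.toAddMonoidHom.ker := by
  have hrange : S.moduleCatToCycles.range =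
      S.f.hom.range.comap S.g.hom.ker.subtype :=
    LinearMap.range_codRestrict _ _ _
  rw [Nat.card_congr S.moduleCatHomologyIso.toLinearEquiv.toEquiv]
  change (S.moduleCatToCycles.range.toAddSubgroup).index = _
  rw [hrange]
  rfl

variable {G : Type} [CommGroup G] [Fintype G] {k : Type} [CommRing k] (A : Rep.{0} k G) {g : G}

lemma card_groupCohomology_even (hg : ∀ x, x ∈ Subgroup.zpowers g) {i : ℕ} [NeZero i]
    (hi : Even i) :
    Nat.card (groupCohomology A i) =
      A.ρ.norm.toAddMonoidHom.range.relIndex (A.ρ g - 1).toAddMonoidHom.ker :=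
  (Nat.card_congr
    (Rep.FiniteCyclicGroup.groupCohomologyIsoEven A g hg i hi).toLinearEquiv.toEquiv).trans
    (card_homology_eq_relIndex _)

lemma card_groupCohomology_odd (hg : ∀ x, x ∈ Subgroup.zpowers g) {i : ℕ} (hi : Odd i) :
    Nat.card (groupCohomology A i) =
      (A.ρ g - 1).toAddMonoidHom.range.relIndex A.ρ.norm.toAddMonoidHom.ker :=
  (Nat.card_congr
    (Rep.FiniteCyclicGroup.groupCohomologyIsoOdd A g hg i hi).toLinearEquiv.toEquiv).trans
    (card_homology_eq_relIndex _)

lemma card_groupCohomology_add_two {G : Type} [CommGroup G] [Finite G] (A : Rep.{0} k G) {g : G}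
    (hg : ∀ x, x ∈ Subgroup.zpowers g) (i : ℕ) [NeZero i] :
    Nat.card (groupCohomology A (i + 2)) = Nat.card (groupCohomology A i) := by
  have := Fintype.ofFinite G
  rcases Nat.even_or_odd i with h | h
  · rw [card_groupCohomology_even A hg h, card_groupCohomology_even A hg (h.add even_two)]
  · rw [card_groupCohomology_odd A hg h, card_groupCohomology_odd A hg (h.add_even even_two)]

end FiniteCyclic

section SumZero

lemma exists_apply_inv_mul_sub_eq {G k : Type*} [Group G] [Fintype G] [CommRing k] {g : G}
    (hg : ∀ x, x ∈ Subgroup.zpowers g) {w : G → k} (hw : ∑ x, w x = 0) :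
    ∃ u : G → k, ∀ x, u (g⁻¹ * x) - u x = w x := by
  classical
  let ρ : Representation k G (G → k) :=
    { toFun := fun h => LinearMap.funLeft k k (h⁻¹ * ·)
      map_one' := by ext; simp
      map_mul' := fun _ _ => by ext; simp [mul_assoc, LinearMap.funLeft] }
  have hsingle (x : G) (a : k) : ρ x (Pi.single 1 a) = Pi.single x a := by
    ext y
    simp [ρ, LinearMap.funLeft_apply, Pi.single_apply, inv_mul_eq_one, eq_comm]
  have hone : ∑ x, Pi.single (M := fun _ : G => k) 1 (w x) = 0 := by
    rw [← map_zero (LinearMap.single k (fun _ : G => k) 1), ← hw, map_sum]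
    rfl
  have hsum : ∑ x, (ρ x (Pi.single 1 (w x)) - Pi.single 1 (w x)) = w := by
    simp_rw [hsingle]
    rw [Finset.sum_sub_distrib, Finset.univ_sum_single, hone, sub_zero]
  have hmem : w ∈ Representation.Coinvariants.ker ρ := by
    rw [← hsum]
    exact Submodule.sum_mem _ fun x _ => Representation.Coinvariants.sub_mem_ker x _
  rw [Representation.FiniteCyclicGroup.coinvariantsKer_eq_range ρ g hg] at hmem
  obtain ⟨u, hu⟩ := hmem
  exact ⟨u, congrFun hu⟩

variable {G L : Type} [Group G] [Fintype G] [Group L] (φ : G →* MulAut L) (k : Type) [CommRing k]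

/-- Summation of functions on a finite group. -/
noncomputable def sumHom : funRep φ k ⟶ Rep.trivial k (L ⋊[φ] G) k :=
  Rep.ofHom ⟨∑ x : G, LinearMap.proj (φ := fun _ => k) x, fun γ => LinearMap.ext fun w => by
    simpa [funRep] using Equiv.sum_comp (Equiv.mulRight γ.right) (w : G → k)⟩

lemma sumHom_apply (w : G → k) : (sumHom φ k).hom w = ∑ x, w x :=
  LinearMap.sum_apply _ _ _

/-- The representation of `L ⋊ G` on the functions `G → k` with sum zero. -/
noncomputable abbrev sumZeroRep : Rep.{0} k (L ⋊[φ] G) :=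
  Rep.subrepresentation (funRep φ k) (LinearMap.ker (sumHom φ k).hom.toLinearMap) fun γ w hw =>
    (Rep.hom_comm_apply (sumHom φ k) γ w).trans hw

/-- The inclusion of the functions with sum zero into all functions. -/
noncomputable abbrev sumZeroInclusion : sumZeroRep φ k ⟶ funRep φ k :=
  Rep.subtype (funRep φ k) (LinearMap.ker (sumHom φ k).hom.toLinearMap) _

lemma sum_leftTranslation_sub (h : G) (w : G → k) :
    (sumHom φ k).hom ((leftTranslation φ k h - 𝟙 _).hom w) = 0 := by
  refine (sumHom_apply φ k _).trans ((Finset.sum_sub_distrib (G := k) _ _).trans ?_)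
  exact sub_eq_zero.2 (Equiv.sum_comp (Equiv.mulLeft h⁻¹) w)

/-- The difference operator `leftTranslation h - 1`, with values in the functions with sum zero. -/
noncomputable def diffHom (h : G) : funRep φ k ⟶ sumZeroRep φ k :=
  Rep.ofHom ⟨(leftTranslation φ k h - 𝟙 _).hom.toLinearMap.codRestrict _
    (sum_leftTranslation_sub φ k h), fun γ => LinearMap.ext fun w => Subtype.ext
      (Rep.hom_comm_apply (leftTranslation φ k h - 𝟙 _) γ w)⟩

lemma diffHom_comp_sumZeroInclusion (h : G) :
    diffHom φ k h ≫ sumZeroInclusion φ k = leftTranslation φ k h - 𝟙 _ := rfl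

lemma sumHom_comp_constHom : sumHom φ k ≫ constHom φ k = ∑ h, leftTranslation φ k h := by
  ext w
  rw [Rep.sum_hom, Representation.IntertwiningMap.toLinearMap_sum, LinearMap.sum_apply]
  refine funext fun x => (sumHom_apply φ k w).trans (Eq.symm ?_)
  refine (Finset.sum_apply (M := fun _ => k) x _ _).trans ?_
  exact Equiv.sum_comp ((Equiv.inv G).trans (Equiv.mulRight x)) (w : G → k)

lemma sumHom_surjective : Function.Surjective (sumHom φ k).hom := fun c => by
  classical
  exact ⟨(Pi.single 1 c : G → k), (sumHom_apply φ k _).trans (by simp)⟩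

lemma diffHom_surjective {g : G} (hg : ∀ x, x ∈ Subgroup.zpowers g) :
    Function.Surjective (diffHom φ k g).hom := by
  rintro ⟨w, hw⟩
  obtain ⟨u, hu⟩ := exists_apply_inv_mul_sub_eq hg ((sumHom_apply φ k w).symm.trans hw)
  exact ⟨u, Subtype.ext (funext hu)⟩

lemma constHom_comp_diffHom (h : G) : constHom φ k ≫ diffHom φ k h = 0 := by
  refine Rep.hom_ext (Representation.IntertwiningMap.ext (LinearMap.ext fun c => ?_))
  exact Subtype.ext (funext fun _ => sub_self c)

lemma shortExact_constHom_diffHom {g : G} (hg : ∀ x, x ∈ Subgroup.zpowers g) :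
    (ShortComplex.mk _ _ (constHom_comp_diffHom φ k g)).ShortExact :=
  shortExact_of_function_exact (constHom_injective φ k) (diffHom_surjective φ k hg) fun w =>
    Subtype.ext_iff.trans (exact_constHom_leftTranslation_sub_id φ k hg w)

lemma sumZeroInclusion_comp_sumHom : sumZeroInclusion φ k ≫ sumHom φ k = 0 := by
  ext w
  exact w.2

lemma sumZeroInclusion_comp_sum_leftTranslation :
    sumZeroInclusion φ k ≫ ∑ h, leftTranslation φ k h = 0 := by
  rw [← sumHom_comp_constHom, ← Category.assoc,
    sumZeroInclusion_comp_sumHom, Limits.zero_comp]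

lemma shortExact_sumZeroInclusion_sumHom :
    (ShortComplex.mk _ _ (sumZeroInclusion_comp_sumHom φ k)).ShortExact :=
  shortExact_of_function_exact Subtype.val_injective (sumHom_surjective φ k) fun w =>
    ⟨fun hw => ⟨⟨w, hw⟩, rfl⟩, by rintro ⟨w, rfl⟩; exact w.2⟩

end SumZero

section CoeffMap

variable {k Γ : Type} [CommRing k] [Group Γ] {A B C : Rep.{0} k Γ}

/-- The map on group cohomology induced by a map of coefficients, as an additive map. -/
noncomputable abbrev coeffMap (f : A ⟶ B) (n : ℕ) : groupCohomology A n →+ groupCohomology B n :=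
  (map (MonoidHom.id Γ) f n).hom.toAddMonoidHom

lemma coeffMap_comp (f : A ⟶ B) (f' : B ⟶ C) (n : ℕ) :
    coeffMap (f ≫ f') n = (coeffMap f' n).comp (coeffMap f n) := by
  rw [coeffMap, map_id_comp]
  rfl

lemma range_coeffMap_le_ker {f : A ⟶ B} {f' : B ⟶ C} (h : f ≫ f' = 0) (n : ℕ) :
    (coeffMap f n).range ≤ (coeffMap f' n).ker := by
  rw [AddMonoidHom.range_le_ker_iff, ← coeffMap_comp, h, coeffMap,
    show map (MonoidHom.id Γ) (0 : A ⟶ C) n = 0 from (functor k Γ n).map_zero A C]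
  rfl

lemma coeffMap_zero_injective {f : A ⟶ B} (hf : Function.Injective f.hom) :
    Function.Injective (coeffMap f 0) := by
  have := (Rep.mono_iff_injective f).2 hf
  exact (ModuleCat.mono_iff_injective _).1 inferInstance

lemma map_sub_id (f : A ⟶ A) (n : ℕ) :
    map (MonoidHom.id Γ) (f - 𝟙 A) n = map (MonoidHom.id Γ) f n - 𝟙 _ :=
  (congrArg (cohomologyMap · n) ((cochainsFunctor k Γ).map_sub (f := f) (g := 𝟙 A))).trans
    ((cohomologyMap_sub _ _).trans (congrArg _ (map_id n)))

lemma cochainsMap_id_sum {ι : Type*} (s : Finset ι) (f : ι → (A ⟶ B)) :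
    cochainsMap (MonoidHom.id Γ) (∑ i ∈ s, f i) = ∑ i ∈ s, cochainsMap (MonoidHom.id Γ) (f i) :=
  (cochainsFunctor k Γ).map_sum f s

lemma map_id_sum {ι : Type*} (s : Finset ι) (f : ι → (A ⟶ B)) (n : ℕ) :
    map (MonoidHom.id Γ) (∑ i ∈ s, f i) n = ∑ i ∈ s, map (MonoidHom.id Γ) (f i) n :=
  (congrArg (cohomologyMap · n) (cochainsMap_id_sum s f)).trans (cohomologyMap_sum s _)

variable {X : ShortComplex (Rep.{0} k Γ)} (hX : X.ShortExact) (n : ℕ)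

/-- The connecting map of the long exact sequence of group cohomology, as an additive map. -/
noncomputable abbrev connectingMap : groupCohomology X.X₃ n →+ groupCohomology X.X₁ (n + 1) :=
  (δ hX n (n + 1) rfl).hom.toAddMonoidHom

lemma range_coeffMap_le_comap_connectingMap (P : AddSubgroup (groupCohomology X.X₁ (n + 1))) :
    (coeffMap X.g n).range ≤ P.comap (connectingMap hX n) := by
  rintro _ ⟨x, rfl⟩
  exact (congrArg (· ∈ P) ((exact_map_δ hX n).apply_apply_eq_zero x)).mpr P.zero_mem

lemma index_dvd_relIndex_mul_index_comap_connectingMap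
    {P : AddSubgroup (groupCohomology X.X₁ (n + 1))}
    {K : AddSubgroup (groupCohomology X.X₂ (n + 1))} (hK : (coeffMap X.f (n + 1)).range ≤ K) :
    P.index ∣ (P.map (coeffMap X.f (n + 1))).relIndex K * (P.comap (connectingMap hX n)).index :=
  index_dvd_relIndex_mul_index_comap (exact_δ_map hX n) P hK

lemma card_ker_coeffMap_succ (hX : X.ShortExact) (n : ℕ) :
    Nat.card (coeffMap X.f (n + 1)).ker = (coeffMap X.g n).range.index := by
  have hδ : Function.Exact (connectingMap hX n) (coeffMap X.f (n + 1)) := exact_δ_map hX n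
  have hg : Function.Exact (coeffMap X.g n) (connectingMap hX n) := exact_map_δ hX n
  rw [hδ.addMonoidHom_ker_eq, ← AddSubgroup.index_ker, hg.addMonoidHom_ker_eq]

end CoeffMap

section Interlaced

variable {G L : Type} [CommGroup G] [Group L] (φ : G →* MulAut L) (k : Type)
  [CommRing k] {g : G}

lemma exists_addMonoidHom_ker_eq_ker_coeffMap_constHom (hg : ∀ x, x ∈ Subgroup.zpowers g)
    (n : ℕ) :
    ∃ f : groupCohomology (Rep.trivial k (L ⋊[φ] G) k) n →+ groupCohomology (funCohRep φ k n) 0,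
      f.ker = (coeffMap (constHom φ k) n).ker := by
  have hinv (x) : coeffMap (constHom φ k) n x ∈
      (coeffMap (leftTranslation φ k g - 𝟙 _) n).ker :=
    range_coeffMap_le_ker (constHom_comp_leftTranslation_sub_id φ k g) n ⟨x, rfl⟩
  rw [coeffMap, map_sub_id] at hinv
  let e := (Rep.FiniteCyclicGroup.groupCohomologyIso₀ (funCohRep φ k n) g hg).toLinearEquiv
  refine ⟨e.symm.toAddEquiv.toAddMonoidHom.comp ((coeffMap (constHom φ k) n).codRestrict _ hinv),
    AddSubgroup.ext fun x => ?_⟩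
  exact e.symm.map_eq_zero_iff.trans Subtype.ext_iff

variable [Fintype G]

lemma card_funCohRep_even (hg : ∀ x, x ∈ Subgroup.zpowers g) (n : ℕ) {i : ℕ} [NeZero i]
    (hi : Even i) :
    Nat.card (groupCohomology (funCohRep φ k n) i) =
      ((coeffMap (sumHom φ k) n).range.map (coeffMap (constHom φ k) n)).relIndex
        (coeffMap (leftTranslation φ k g - 𝟙 _) n).ker := by
  rw [AddMonoidHom.map_range, ← coeffMap_comp, sumHom_comp_constHom, coeffMap, coeffMap,
    map_sub_id, map_id_sum, ModuleCat.hom_sum]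
  exact card_groupCohomology_even (funCohRep φ k n) hg hi

lemma card_funCohRep_odd (hg : ∀ x, x ∈ Subgroup.zpowers g) (n : ℕ) {i : ℕ} (hi : Odd i) :
    Nat.card (groupCohomology (funCohRep φ k n) i) =
      ((coeffMap (diffHom φ k g) n).range.map (coeffMap (sumZeroInclusion φ k) n)).relIndex
        (coeffMap (∑ h, leftTranslation φ k h) n).ker := by
  rw [AddMonoidHom.map_range, ← coeffMap_comp, diffHom_comp_sumZeroInclusion, coeffMap, coeffMap,
    map_sub_id, map_id_sum, ModuleCat.hom_sum]
  exact card_groupCohomology_odd (funCohRep φ k n) hg hi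

lemma index_range_sumHom_zero_dvd (hg : ∀ x, x ∈ Subgroup.zpowers g) :
    (coeffMap (sumHom φ k) 0).range.index ∣ Nat.card (groupCohomology (funCohRep φ k 0) 2) := by
  have h := index_dvd_relIndex_mul_relIndex_ker _ (coeffMap (sumHom φ k) 0).range
    (range_coeffMap_le_ker (constHom_comp_leftTranslation_sub_id φ k g) 0)
  rwa [← card_funCohRep_even φ k hg 0 even_two,
    (AddMonoidHom.ker_eq_bot_iff _).2 (coeffMap_zero_injective (constHom_injective φ k)),
    AddSubgroup.relIndex_bot_right, mul_one] at h

lemma index_range_diffHom_zero_dvd (hg : ∀ x, x ∈ Subgroup.zpowers g) :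
    (coeffMap (diffHom φ k g) 0).range.index ∣ Nat.card (groupCohomology (funCohRep φ k 0) 1) := by
  have h := index_dvd_relIndex_mul_relIndex_ker _ (coeffMap (diffHom φ k g) 0).range
    (range_coeffMap_le_ker (sumZeroInclusion_comp_sum_leftTranslation φ k) 0)
  rwa [← card_funCohRep_odd φ k hg 0 odd_one,
    (AddMonoidHom.ker_eq_bot_iff _).2 (coeffMap_zero_injective Subtype.val_injective),
    AddSubgroup.relIndex_bot_right, mul_one] at h

lemma index_range_sumHom_succ_dvd (hg : ∀ x, x ∈ Subgroup.zpowers g) (n : ℕ) :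
    (coeffMap (sumHom φ k) (n + 1)).range.index ∣
      Nat.card (groupCohomology (funCohRep φ k (n + 1)) 2) *
        (coeffMap (diffHom φ k g) n).range.index := by
  have hexact := shortExact_constHom_diffHom φ k hg
  rw [card_funCohRep_even φ k hg (n + 1) even_two]
  exact (index_dvd_relIndex_mul_index_comap_connectingMap hexact n
    (range_coeffMap_le_ker (constHom_comp_leftTranslation_sub_id φ k g) (n + 1))).trans
    (mul_dvd_mul_left _ (AddSubgroup.index_dvd_of_le
      (range_coeffMap_le_comap_connectingMap hexact n _)))

lemma index_range_diffHom_succ_dvd (hg : ∀ x, x ∈ Subgroup.zpowers g) (n : ℕ) :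
    (coeffMap (diffHom φ k g) (n + 1)).range.index ∣
      Nat.card (groupCohomology (funCohRep φ k (n + 1)) 1) *
        ((coeffMap (diffHom φ k g) (n + 1)).range.comap
          (connectingMap (shortExact_sumZeroInclusion_sumHom φ k) n)).index := by
  rw [card_funCohRep_odd φ k hg (n + 1) odd_one]
  exact index_dvd_relIndex_mul_index_comap_connectingMap
    (shortExact_sumZeroInclusion_sumHom φ k) n
    (range_coeffMap_le_ker (sumZeroInclusion_comp_sum_leftTranslation φ k) (n + 1))

/- The two exact sequences `k → funRep → sumZeroRep` and `sumZeroRep → funRep → k` bound each index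
by the other one in degree one less. -/
theorem index_range_dvd_prod_card (hg : ∀ x, x ∈ Subgroup.zpowers g) (n : ℕ) :
    (coeffMap (sumHom φ k) n).range.index ∣
        ∏ p ∈ antidiagonal n, Nat.card (groupCohomology (funCohRep φ k p.2) (p.1 + 2)) ∧
      (coeffMap (diffHom φ k g) n).range.index ∣
        ∏ p ∈ antidiagonal n, Nat.card (groupCohomology (funCohRep φ k p.2) (p.1 + 1)) := by
  induction n with
  | zero =>
    simpa using ⟨index_range_sumHom_zero_dvd φ k hg, index_range_diffHom_zero_dvd φ k hg⟩
  | succ n ih =>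
    simp only [Finset.Nat.prod_antidiagonal_succ, zero_add]
    refine ⟨(index_range_sumHom_succ_dvd φ k hg n).trans (mul_dvd_mul_left _ ?_),
      (index_range_diffHom_succ_dvd φ k hg n).trans (mul_dvd_mul_left _ ?_)⟩
    · simpa only [card_groupCohomology_add_two _ hg] using ih.2
    · exact (AddSubgroup.index_dvd_of_le (range_coeffMap_le_comap_connectingMap
        (shortExact_sumZeroInclusion_sumHom φ k) n _)).trans ih.1

theorem card_torsion_groupCohomology_semidirectProduct_dvd (hg : ∀ x, x ∈ Subgroup.zpowers g)
    (n : ℕ) :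
    Nat.card (AddCommGroup.torsion (groupCohomology (Rep.trivial k (L ⋊[φ] G) k) (n + 1))) ∣
      Nat.card (AddCommGroup.torsion (groupCohomology (funCohRep φ k (n + 1)) 0)) *
        (coeffMap (diffHom φ k g) n).range.index := by
  obtain ⟨f, hf⟩ := exists_addMonoidHom_ker_eq_ker_coeffMap_constHom φ k hg (n + 1)
  have hcard := card_ker_coeffMap_succ (shortExact_constHom_diffHom φ k hg) n
  rw [← hcard, ← hf]
  exact card_torsion_dvd_mul_card_ker f

end Interlaced

section Finiteness

lemma addGroup_fg_of_module_finite_int (V : Type*) [AddCommGroup V] [inst : Module ℤ V]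
    [Module.Finite ℤ V] : AddGroup.FG V := by
  obtain rfl : inst = AddCommGroup.toIntModule V := Subsingleton.elim _ _
  exact Module.Finite.iff_addGroup_fg.1 ‹_›

lemma addSubgroup_fg {V : Type*} [AddCommGroup V] [AddGroup.FG V] (K : AddSubgroup V) :
    AddGroup.FG K := by
  have : Module.Finite ℤ V := Module.Finite.iff_addGroup_fg.2 ‹_›
  exact Module.Finite.iff_addGroup_fg.1
    (inferInstanceAs (Module.Finite ℤ (AddSubgroup.toIntSubmodule K)))

lemma finite_torsion_of_fg (V : Type*) [AddCommGroup V] [AddGroup.FG V] :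
    Finite (AddCommGroup.torsion V) := by
  have := addSubgroup_fg (AddCommGroup.torsion V)
  exact AddCommGroup.finite_of_fg_isAddTorsion _ fun x =>
    AddSubmonoid.isOfFinAddOrder_coe.1 x.2

lemma relIndex_ne_zero_of_nsmul_mem {V : Type*} [AddCommGroup V] [AddGroup.FG V]
    {P Q : AddSubgroup V} {m : ℕ} (hm : m ≠ 0) (h : ∀ x ∈ Q, m • x ∈ P) : P.relIndex Q ≠ 0 := by
  have := addSubgroup_fg Q
  refine AddSubgroup.index_ne_zero_iff_finite.2 (AddCommGroup.finite_of_fg_isAddTorsion _ ?_)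
  rintro ⟨x⟩
  refine isOfFinAddOrder_iff_nsmul_eq_zero.2 ⟨m, hm.bot_lt, ?_⟩
  exact (QuotientAddGroup.eq_zero_iff _).2 (h x.1 x.2)

lemma card_torsion_of_finite (V : Type*) [AddCommGroup V] [Finite V] :
    Nat.card (AddCommGroup.torsion V) = Nat.card V := by
  rw [AddCommGroup.torsion_eq_top_iff.2 isAddTorsion_of_finite, AddSubgroup.card_top]

variable {G : Type} [Group G] [Fintype G] {k : Type} [CommRing k] {g : G}

lemma card_nsmul_mem_range_norm (A : Rep.{0} k G) (hg : ∀ x, x ∈ Subgroup.zpowers g) {x : A}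
    (hx : A.ρ g x = x) : Nat.card G • x ∈ A.ρ.norm.range := by
  have hinv (h : G) : A.ρ h x = x := by
    obtain ⟨i, rfl⟩ := mem_powers_iff_mem_zpowers.2 (hg h)
    rw [map_pow, Module.End.pow_apply]
    exact Function.iterate_fixed hx i
  exact ⟨x, by simp [Representation.norm, hinv]⟩

lemma card_nsmul_mem_range_sub_one (A : Rep.{0} k G) (hg : ∀ x, x ∈ Subgroup.zpowers g) {x : A}
    (hx : A.ρ.norm x = 0) : Nat.card G • x ∈ (A.ρ g - 1).range := by
  have hmem : ∑ h, (A.ρ h x - x) ∈ Representation.Coinvariants.ker A.ρ :=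
    sum_mem fun h _ => Representation.Coinvariants.sub_mem_ker h x
  have hsum : ∑ h, (A.ρ h x - x) = -(Nat.card G • x) := by
    rw [Finset.sum_sub_distrib, ← LinearMap.sum_apply, ← Representation.norm, hx]
    simp
  rw [Representation.FiniteCyclicGroup.coinvariantsKer_eq_range A.ρ g hg, hsum] at hmem
  exact neg_mem_iff.1 hmem

theorem finite_groupCohomology_of_ne_zero {G : Type} [CommGroup G] [Finite G] {g : G}
    (A : Rep.{0} k G) [AddGroup.FG A] (hg : ∀ x, x ∈ Subgroup.zpowers g) (i : ℕ) [NeZero i] :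
    Finite (groupCohomology A i) := by
  have := Fintype.ofFinite G
  refine Nat.finite_of_card_ne_zero ?_
  rcases Nat.even_or_odd i with hi | hi
  · rw [card_groupCohomology_even A hg hi]
    exact relIndex_ne_zero_of_nsmul_mem Nat.card_pos.ne' fun x hx =>
      card_nsmul_mem_range_norm A hg (sub_eq_zero.1 hx)
  · rw [card_groupCohomology_odd A hg hi]
    exact relIndex_ne_zero_of_nsmul_mem Nat.card_pos.ne' fun x hx =>
      card_nsmul_mem_range_sub_one A hg hx

lemma addGroup_fg_groupCohomology_zero {Γ : Type} [Group Γ] (A : Rep.{0} k Γ) [AddGroup.FG A] :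
    AddGroup.FG (groupCohomology A 0) := by
  have := addSubgroup_fg A.ρ.invariants.toAddSubgroup
  exact AddGroup.fg_of_surjective (f := (H0Iso A).toLinearEquiv.symm.toAddEquiv.toAddMonoidHom)
    (H0Iso A).toLinearEquiv.symm.surjective

end Finiteness

section Obstruction

lemma connectingMap_cocycleClass {k Γ : Type} [CommRing k] [Group Γ]
    {X : ShortComplex (Rep.{0} k Γ)} (hX : X.ShortExact) {n : ℕ} (y : (Fin n → Γ) → X.X₂)
    (hy : inhomogeneousCochains.d X.X₃ n ((cochainsMap (MonoidHom.id Γ) X.g).f n y) = 0)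
    (x : (Fin (n + 1) → Γ) → X.X₁) (hx : inhomogeneousCochains.d X.X₁ (n + 1) x = 0)
    (hxy : (cochainsMap (MonoidHom.id Γ) X.f).f (n + 1) x = inhomogeneousCochains.d X.X₂ n y) :
    connectingMap hX n (cocycleClass _ hy) = cocycleClass x hx := by
  refine δ_apply hX rfl _ ?_ y rfl x (hxy.trans ?_) <;> rw [inhomogeneousCochains.d_def]
  exact hy

variable {G L : Type} [Group G] [Fintype G] [Group L] (φ : G →* MulAut L) (k : Type)
  [CommRing k]

/-- The norm `∑ h` of the action of `G` on the cochains of `L`. -/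
noncomputable def cochainsNorm :
    inhomogeneousCochains (Rep.trivial k L k) ⟶ inhomogeneousCochains (Rep.trivial k L k) :=
  ∑ h, cochainsAct φ k h

lemma cochainsNorm_f_apply {n : ℕ} (f : (Fin n → L) → k) (v : Fin n → L) :
    (cochainsNorm φ k).f n f v = ∑ h, f (fun i => φ h (v i)) := by
  have hsum : ((cochainsNorm φ k).f n).hom = ∑ h, ((cochainsAct φ k h).f n).hom :=
    (congrArg ModuleCat.Hom.hom ((HomologicalComplex.eval _ _ n).map_sum _ _)).trans
      (ModuleCat.hom_sum _ _)
  calc (cochainsNorm φ k).f n f v = (∑ h, (cochainsAct φ k h).f n f) v :=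
        congrFun ((congr($hsum f)).trans (LinearMap.sum_apply _ _ _)) v
    _ = ∑ h, f (fun i => φ h⁻¹ (v i)) := Finset.sum_apply _ _ _
    _ = ∑ h, f (fun i => φ h (v i)) := Fintype.sum_equiv (Equiv.inv G) _ _ fun _ => rfl

lemma cochainsAct_comp_cochainsNorm (g : G) :
    cochainsAct φ k g ≫ cochainsNorm φ k = cochainsNorm φ k := by
  simp only [cochainsNorm, Preadditive.comp_sum, ← cochainsAct_mul]
  exact Fintype.sum_equiv (Equiv.mulRight g) _ _ fun _ => rfl

lemma cochainsNorm_comp_shearMap :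
    cochainsNorm φ k ≫ shearMap φ k =
      shearMap φ k ≫ cochainsMap (MonoidHom.id _) (sumHom φ k) ≫
        cochainsMap (MonoidHom.id _) (constHom φ k) := by
  rw [← cochainsMap_id_comp, sumHom_comp_constHom, cochainsMap_id_sum, cochainsNorm,
    Preadditive.sum_comp, Preadditive.comp_sum]
  exact Finset.sum_congr rfl fun h _ => cochainsAct_comp_shearMap φ k h

variable {φ k} {g : G} {n : ℕ} {c : (Fin (n + 1) → L) → k} {b : (Fin n → L) → k}

lemma d_cochainsNorm_eq_zero
    (hb : inhomogeneousCochains.d (Rep.trivial k L k) n b = (cochainsAct φ k g).f (n + 1) c - c) :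
    inhomogeneousCochains.d (Rep.trivial k L k) n ((cochainsNorm φ k).f n b) = 0 := by
  have hact := congr(($(cochainsAct_comp_cochainsNorm φ k g)).f (n + 1) c)
  rw [d_chainMap_apply, hb]
  exact (map_sub _ _ _).trans (sub_eq_zero.2 hact)

lemma d_shearMap_eq
    (hb : inhomogeneousCochains.d (Rep.trivial k L k) n b = (cochainsAct φ k g).f (n + 1) c - c) :
    inhomogeneousCochains.d (funRep φ k) n ((shearMap φ k).f n b) =
      (cochainsMap (MonoidHom.id _) (sumZeroInclusion φ k)).f (n + 1)
        ((cochainsMap (MonoidHom.id _) (diffHom φ k g)).f (n + 1)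
          ((shearMap φ k).f (n + 1) c)) := by
  have hact := congr(($(cochainsAct_comp_shearMap φ k g)).f (n + 1) c)
  rw [d_chainMap_apply, hb]
  exact (map_sub ((shearMap φ k).f (n + 1)).hom _ _).trans (congrArg (· - _) hact)

lemma d_cochainsMap_sumHom_shearMap_eq_zero
    (hb : inhomogeneousCochains.d (Rep.trivial k L k) n b = (cochainsAct φ k g).f (n + 1) c - c) :
    inhomogeneousCochains.d (Rep.trivial k (L ⋊[φ] G) k) n
      ((cochainsMap (MonoidHom.id _) (sumHom φ k)).f n ((shearMap φ k).f n b)) = 0 := by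
  rw [d_chainMap_apply, d_shearMap_eq hb, ← ModuleCat.comp_apply, ← HomologicalComplex.comp_f,
    ← cochainsMap_id_comp, sumZeroInclusion_comp_sumHom, cochainsMap_zero]
  rfl

lemma cocycleClass_cochainsNorm_mem_range
    (hb : inhomogeneousCochains.d (Rep.trivial k L k) n b = (cochainsAct φ k g).f (n + 1) c - c)
    (hshear : Function.Bijective (cohomologyMap (shearMap φ k) n))
    (hmem : cocycleClass _ (d_cochainsMap_sumHom_shearMap_eq_zero hb) ∈
      (coeffMap (sumHom φ k) n).range) :
    cocycleClass _ (d_cochainsNorm_eq_zero hb) ∈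
      Set.range (cohomologyMap (cochainsNorm φ k) n) := by
  obtain ⟨u, hu⟩ := hmem
  obtain ⟨w, rfl⟩ := hshear.2 u
  refine ⟨w, hshear.1 ?_⟩
  replace hu : cohomologyMap (cochainsMap (MonoidHom.id _) (sumHom φ k)) n
      (cohomologyMap (shearMap φ k) n w) =
        cocycleClass _ (d_cochainsMap_sumHom_shearMap_eq_zero hb) := hu
  have hnorm := congr(cohomologyMap $(cochainsNorm_comp_shearMap φ k) n w)
  simp only [cohomologyMap_comp, ModuleCat.comp_apply] at hnorm
  rw [hnorm, hu, cohomologyMap_cocycleClass, cohomologyMap_cocycleClass]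
  congr 1
  exact congr(($(cochainsNorm_comp_shearMap φ k)).f n b).symm

theorem range_sumHom_lt_comap_connectingMap
    (hc : inhomogeneousCochains.d (Rep.trivial k L k) (n + 1) c = 0)
    (hb : inhomogeneousCochains.d (Rep.trivial k L k) n b = (cochainsAct φ k g).f (n + 1) c - c)
    (hshear : Function.Bijective (cohomologyMap (shearMap φ k) n))
    (hNb : cocycleClass _ (d_cochainsNorm_eq_zero hb) ∉
      Set.range (cohomologyMap (cochainsNorm φ k) n)) :
    (coeffMap (sumHom φ k) n).range < (coeffMap (diffHom φ k g) (n + 1)).range.comap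
      (connectingMap (shortExact_sumZeroInclusion_sumHom φ k) n) := by
  refine (range_coeffMap_le_comap_connectingMap
    (shortExact_sumZeroInclusion_sumHom φ k) n _).lt_of_not_ge fun hle =>
    hNb (cocycleClass_cochainsNorm_mem_range hb hshear (hle ?_))
  have hsc : inhomogeneousCochains.d (funRep φ k) (n + 1) ((shearMap φ k).f (n + 1) c) = 0 := by
    rw [d_chainMap_apply, hc]
    exact map_zero _
  exact ⟨cocycleClass _ hsc, (cohomologyMap_cocycleClass _ _ hsc).trans
    (connectingMap_cocycleClass (shortExact_sumZeroInclusion_sumHom φ k) _ _ _ _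
      (d_shearMap_eq hb).symm).symm⟩

end Obstruction

section Comparison

lemma card_torsion_congr {A B : Type*} [AddCommGroup A] [AddCommGroup B] (e : A ≃+ B) :
    Nat.card (AddCommGroup.torsion A) = Nat.card (AddCommGroup.torsion B) := by
  rw [← e.map_torsion]
  exact Nat.card_congr (e.addSubgroupMap _).toEquiv

lemma card_torsion_pi {ι : Type*} [Fintype ι] (A : ι → Type*) [∀ i, AddCommGroup (A i)] :
    Nat.card (AddCommGroup.torsion (∀ i, A i)) = ∏ i, Nat.card (AddCommGroup.torsion (A i)) := by
  rw [← Nat.card_pi]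
  refine Nat.card_congr ((Equiv.subtypeEquivRight fun x => ?_).trans
    (Equiv.subtypePiEquivPi (p := fun i a => a ∈ AddCommGroup.torsion (A i))))
  exact ⟨fun h i => (Pi.evalAddMonoidHom A i).isOfFinAddOrder h, IsOfFinAddOrder.pi⟩

lemma card_torsion_groupCohomology_congr {k G : Type} [CommRing k] [Group G] {A B : Rep.{0} k G}
    (e : A ≅ B) (n : ℕ) :
    Nat.card (AddCommGroup.torsion (groupCohomology A n)) =
      Nat.card (AddCommGroup.torsion (groupCohomology B n)) :=
  card_torsion_congr ((functor k G n).mapIso e).toLinearEquiv.toAddEquiv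

lemma addGroup_fg_funCohRep {G L : Type} [Group G] [Group L] (φ : G →* MulAut L) (n : ℕ)
    [Module.Finite ℤ (groupCohomology (Rep.trivial ℤ L ℤ) n)] :
    AddGroup.FG (funCohRep φ ℤ n) := by
  have := addGroup_fg_of_module_finite_int (groupCohomology (Rep.trivial ℤ L ℤ) n)
  exact AddGroup.fg_of_surjective (f := (cohomologyMap (shearMap φ ℤ) n).hom.toAddMonoidHom)
    (shearMap_bijective φ ℤ n).2

variable {G L : Type} [CommGroup G] [Group L] {φ : G →* MulAut L}
  {g : G} {n : ℕ} {c : (Fin (n + 1) → L) → ℤ} {b : (Fin n → L) → ℤ}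
  [∀ j, Module.Finite ℤ (groupCohomology (Rep.trivial ℤ L ℤ) j)]

lemma prod_card_torsion_funCohRep [Finite G] (hg : ∀ x, x ∈ Subgroup.zpowers g) :
    ∏ p ∈ antidiagonal (n + 2),
        Nat.card (AddCommGroup.torsion (groupCohomology (funCohRep φ ℤ p.2) p.1)) =
      Nat.card (AddCommGroup.torsion (groupCohomology (funCohRep φ ℤ (n + 2)) 0)) *
        (Nat.card (groupCohomology (funCohRep φ ℤ (n + 1)) 1) *
          ∏ p ∈ antidiagonal n, Nat.card (groupCohomology (funCohRep φ ℤ p.2) (p.1 + 2))) := by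
  have hfg := addGroup_fg_funCohRep φ
  have hfin (i j : ℕ) [NeZero i] := finite_groupCohomology_of_ne_zero (funCohRep φ ℤ j) hg i
  simp only [Finset.Nat.prod_antidiagonal_succ, zero_add, add_assoc, Nat.reduceAdd,
    card_torsion_of_finite]

variable [Fintype G]

theorem card_torsion_groupCohomology_semidirectProduct_lt (hg : ∀ x, x ∈ Subgroup.zpowers g)
    (hlt : (coeffMap (sumHom φ ℤ) n).range < (coeffMap (diffHom φ ℤ g) (n + 1)).range.comap
      (connectingMap (shortExact_sumZeroInclusion_sumHom φ ℤ) n)) :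
    Nat.card (AddCommGroup.torsion (groupCohomology (Rep.trivial ℤ (L ⋊[φ] G) ℤ) (n + 2))) <
      ∏ p ∈ antidiagonal (n + 2),
        Nat.card (AddCommGroup.torsion (groupCohomology (funCohRep φ ℤ p.2) p.1)) := by
  have hfg := addGroup_fg_funCohRep φ
  have hfin (i j : ℕ) [NeZero i] := finite_groupCohomology_of_ne_zero (funCohRep φ ℤ j) hg i
  have := addGroup_fg_groupCohomology_zero (funCohRep φ ℤ (n + 2))
  have := finite_torsion_of_fg (groupCohomology (funCohRep φ ℤ (n + 2)) 0)
  have hprod :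
      0 < ∏ p ∈ antidiagonal n, Nat.card (groupCohomology (funCohRep φ ℤ p.2) (p.1 + 2)) :=
    Finset.prod_pos fun _ _ => Nat.card_pos
  have hsum := (index_range_dvd_prod_card φ ℤ hg n).1
  have : (coeffMap (sumHom φ ℤ) n).range.FiniteIndex := ⟨ne_zero_of_dvd_ne_zero hprod.ne' hsum⟩
  have hindex := (AddSubgroup.index_strictAnti hlt).trans_le (Nat.le_of_dvd hprod hsum)
  have hpos := Nat.pos_of_ne_zero (AddSubgroup.finiteIndex_of_le hlt.le).index_ne_zero
  have hdvd := (card_torsion_groupCohomology_semidirectProduct_dvd φ ℤ hg (n + 1)).trans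
    (mul_dvd_mul_left _ (index_range_diffHom_succ_dvd φ ℤ hg n))
  rw [prod_card_torsion_funCohRep hg]
  refine (Nat.le_of_dvd (Nat.mul_pos Nat.card_pos (Nat.mul_pos Nat.card_pos hpos)) hdvd).trans_lt ?_
  gcongr <;> exact Nat.card_pos

theorem not_nonempty_addEquiv_of_cocycleClass_cochainsNorm_notMem_range
    (hg : ∀ x, x ∈ Subgroup.zpowers g)
    (hc : inhomogeneousCochains.d (Rep.trivial ℤ L ℤ) (n + 1) c = 0)
    (hb : inhomogeneousCochains.d (Rep.trivial ℤ L ℤ) n b = (cochainsAct φ ℤ g).f (n + 1) c - c)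
    (hNb : cocycleClass _ (d_cochainsNorm_eq_zero hb) ∉
      Set.range (cohomologyMap (cochainsNorm φ ℤ) n)) :
    ¬ Nonempty (groupCohomology (Rep.trivial ℤ (L ⋊[φ] G) ℤ) (n + 2) ≃+
      ((p : {p : ℕ × ℕ // p.1 + p.2 = n + 2}) →
        groupCohomology (Crystal.cohRep φ (1 : Representation ℤ G ℤ) p.1.2) p.1.1)) := by
  rintro ⟨e⟩
  have : Fintype {p : ℕ × ℕ // p.1 + p.2 = n + 2} :=
    Fintype.subtype (antidiagonal (n + 2)) fun _ => Finset.HasAntidiagonal.mem_antidiagonal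
  have hlt := card_torsion_groupCohomology_semidirectProduct_lt hg
    (range_sumHom_lt_comap_connectingMap hc hb (shearMap_bijective φ ℤ n) hNb)
  refine hlt.ne ((card_torsion_congr e).trans ((card_torsion_pi _).trans ?_))
  rw [Finset.prod_subtype _ fun _ => Finset.HasAntidiagonal.mem_antidiagonal]
  refine Finset.prod_congr rfl fun p _ => ?_
  obtain ⟨i⟩ := nonempty_cohRep_iso_funCohRep φ ℤ p.1.2
  exact card_torsion_groupCohomology_congr i p.1.1

end Comparison

section LowDegree

variable {k L : Type} [CommRing k] [Group L]

lemma d_one_trivial_apply (f : (Fin 1 → L) → k) (x y : L) :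
    inhomogeneousCochains.d (Rep.trivial k L k) 1 f ![x, y] = f ![y] - f ![x * y] + f ![x] := by
  have h₀ : (fun i : Fin 1 => ![x, y] i.succ) = ![y] := by ext i; fin_cases i; rfl
  have h₁ : Fin.contractNth (0 : Fin 2) (· * ·) ![x, y] = ![x * y] := by ext i; fin_cases i; rfl
  have h₂ : Fin.contractNth (1 : Fin 2) (· * ·) ![x, y] = ![x] := by ext i; fin_cases i; rfl
  rw [inhomogeneousCochains.d_hom_apply, Fin.sum_univ_two, h₀, h₁, h₂]
  simp [sub_eq_add_neg, add_assoc]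

lemma d_two_trivial_apply (f : (Fin 2 → L) → k) (x y z : L) :
    inhomogeneousCochains.d (Rep.trivial k L k) 2 f ![x, y, z] =
      f ![y, z] - f ![x * y, z] + f ![x, y * z] - f ![x, y] := by
  have h₀ : (fun i : Fin 2 => ![x, y, z] i.succ) = ![y, z] := by ext i; fin_cases i <;> rfl
  have h₁ : Fin.contractNth (0 : Fin 3) (· * ·) ![x, y, z] = ![x * y, z] := by
    ext i; fin_cases i <;> rfl
  have h₂ : Fin.contractNth (1 : Fin 3) (· * ·) ![x, y, z] = ![x, y * z] := by
    ext i; fin_cases i <;> rfl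
  have h₃ : Fin.contractNth (2 : Fin 3) (· * ·) ![x, y, z] = ![x, y] := by
    ext i; fin_cases i <;> rfl
  rw [inhomogeneousCochains.d_hom_apply, Fin.sum_univ_three, h₀, h₁, h₂, h₃]
  simp [sub_eq_add_neg, add_assoc, pow_succ]

lemma d_three_trivial_apply (f : (Fin 3 → L) → k) (x y z w : L) :
    inhomogeneousCochains.d (Rep.trivial k L k) 3 f ![x, y, z, w] =
      f ![y, z, w] - f ![x * y, z, w] + f ![x, y * z, w] - f ![x, y, z * w] + f ![x, y, z] := by
  have h₀ : (fun i : Fin 3 => ![x, y, z, w] i.succ) = ![y, z, w] := by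
    ext i; fin_cases i <;> rfl
  have h₁ : Fin.contractNth (0 : Fin 4) (· * ·) ![x, y, z, w] = ![x * y, z, w] := by
    ext i; fin_cases i <;> rfl
  have h₂ : Fin.contractNth (1 : Fin 4) (· * ·) ![x, y, z, w] = ![x, y * z, w] := by
    ext i; fin_cases i <;> rfl
  have h₃ : Fin.contractNth (2 : Fin 4) (· * ·) ![x, y, z, w] = ![x, y, z * w] := by
    ext i; fin_cases i <;> rfl
  have h₄ : Fin.contractNth (3 : Fin 4) (· * ·) ![x, y, z, w] = ![x, y, z] := by
    ext i; fin_cases i <;> rfl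
  rw [inhomogeneousCochains.d_hom_apply, Fin.sum_univ_four, h₀, h₁, h₂, h₃, h₄]
  simp [sub_eq_add_neg, add_assoc, pow_succ]

end LowDegree

section Alternation

variable {k M : Type} [CommRing k]

/-- The alternation `(x, y) ↦ f(x, y) - f(y, x)` of a `2`-cochain. On cocycles it induces the
identification of `H²(M, k)` with the alternating forms on `M`, when `M` is free abelian. -/
def alternation (f : (Fin 2 → Multiplicative M) → k) (x y : M) : k :=
  f ![.ofAdd x, .ofAdd y] - f ![.ofAdd y, .ofAdd x]

lemma alternation_swap (f : (Fin 2 → Multiplicative M) → k) (x y : M) :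
    alternation f x y = -alternation f y x :=
  (neg_sub _ _).symm

variable [AddCommGroup M]

lemma alternation_add_left {f : (Fin 2 → Multiplicative M) → k}
    (hf : inhomogeneousCochains.d (Rep.trivial k (Multiplicative M) k) 2 f = 0) (x y z : M) :
    alternation f (x + y) z = alternation f x z + alternation f y z := by
  have cocycle (x y z : Multiplicative M) :
      f ![y, z] - f ![x * y, z] + f ![x, y * z] - f ![x, y] = 0 :=
    (d_two_trivial_apply f x y z).symm.trans (congrFun hf _)
  have hxyz := cocycle (.ofAdd x) (.ofAdd y) (.ofAdd z)
  have hzxy := cocycle (.ofAdd z) (.ofAdd x) (.ofAdd y)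
  have hxzy := cocycle (.ofAdd x) (.ofAdd z) (.ofAdd y)
  rw [mul_comm (Multiplicative.ofAdd z)] at hzxy
  rw [mul_comm (Multiplicative.ofAdd z)] at hxzy
  simp only [alternation, ofAdd_add]
  linear_combination hxzy - hxyz - hzxy

/-- The alternation of a `2`-cocycle, as a biadditive map. -/
def alternationHom (f : (Fin 2 → Multiplicative M) → k)
    (hf : inhomogeneousCochains.d (Rep.trivial k (Multiplicative M) k) 2 f = 0) : M →+ M →+ k :=
  AddMonoidHom.mk' (fun x => AddMonoidHom.mk' (alternation f x) fun y z => by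
    rw [alternation_swap, alternation_add_left hf, neg_add, ← alternation_swap,
      ← alternation_swap]) fun x y => AddMonoidHom.ext (alternation_add_left hf x y)

lemma alternation_eq_of_cocycleClass_eq {f f' : (Fin 2 → Multiplicative M) → k}
    {hf : inhomogeneousCochains.d (Rep.trivial k (Multiplicative M) k) 2 f = 0}
    {hf' : inhomogeneousCochains.d (Rep.trivial k (Multiplicative M) k) 2 f' = 0}
    (h : cocycleClass (A := Rep.trivial k (Multiplicative M) k) f hf = cocycleClass f' hf') :
    alternation f = alternation f' := by
  obtain ⟨b, hb⟩ := (cocycleClass_eq_iff hf hf').1 h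
  ext x y
  have hxy (x y : Multiplicative M) : b ![y] - b ![x * y] + b ![x] = f ![x, y] - f' ![x, y] :=
    (d_one_trivial_apply b x y).symm.trans (congrFun hb _)
  have hyx := hxy (.ofAdd y) (.ofAdd x)
  rw [mul_comm] at hyx
  rw [alternation, alternation]
  linear_combination hyx - hxy (.ofAdd x) (.ofAdd y)

end Alternation

section Example

/-- An automorphism of order four of `ℤ⁶ = P ⊕ P*`, where `P = ℤ³` and the action on `P*` is
contragredient to the one on `P`. -/
def quarterTurn : (Fin 6 → ℤ) ≃ₗ[ℤ] (Fin 6 → ℤ) where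
  toFun x := ![x 0 + x 1, -x 2, x 1, x 3, -x 5, -x 3 + x 4]
  invFun x := ![x 0 - x 2, x 2, -x 1, x 3, x 3 + x 5, -x 4]
  left_inv x := by ext i; fin_cases i <;> simp
  right_inv x := by ext i; fin_cases i <;> simp
  map_add' x y := by ext i; fin_cases i <;> simp <;> ring
  map_smul' r x := by ext i; fin_cases i <;> simp <;> ring

lemma quarterTurn_apply (x : Fin 6 → ℤ) :
    quarterTurn x = ![x 0 + x 1, -x 2, x 1, x 3, -x 5, -x 3 + x 4] :=
  rfl

lemma quarterTurn_pow_four : quarterTurn ^ 4 = 1 := by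
  ext x i
  simp only [pow_succ, pow_zero, one_mul, LinearEquiv.mul_apply, quarterTurn_apply,
    Matrix.cons_val]
  fin_cases i <;> simp
  ring

/-- The action of `ℤ/4` on `ℤ⁶` whose generator acts by `quarterTurn`. -/
def quarterTurnAction : Multiplicative (ZMod 4) →* MulAut (Crystal.Lat 6) :=
  (Crystal.linToAut 6).comp (Crystal.zmodHom 4 quarterTurn quarterTurn_pow_four)

lemma quarterTurnAction_ofAdd_one_inv_apply (x : Crystal.Lat 6) :
    quarterTurnAction (.ofAdd 1)⁻¹ x = .ofAdd ![x.toAdd 0 - x.toAdd 2, x.toAdd 2, -x.toAdd 1,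
      x.toAdd 3, x.toAdd 3 + x.toAdd 5, -x.toAdd 4] := by
  rw [map_inv]
  rfl

/-- The triangular number `a(a-1)/2`, which is an exact division. -/
def triangle (a : ℤ) : ℤ := a * (a - 1) / 2

lemma two_mul_triangle (a : ℤ) : 2 * triangle a = a * (a - 1) :=
  Int.mul_ediv_cancel' (Int.even_mul_pred_self a).two_dvd

lemma triangle_add (a b : ℤ) : triangle (a + b) = triangle a + triangle b + a * b := by
  linarith [two_mul_triangle a, two_mul_triangle b, two_mul_triangle (a + b)]

/-- A trilinear `3`-cocycle on `ℤ⁶` whose cohomology class is invariant under `quarterTurn`. -/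
def invariantCocycle (v : Fin 3 → Crystal.Lat 6) : ℤ :=
  let x := (v 0).toAdd; let y := (v 1).toAdd; let z := (v 2).toAdd
  x 0 * y 1 * z 3 - (x 0 * y 1 + x 0 * y 2 + x 1 * y 2) * z 4 + (x 0 * y 1 - x 0 * y 2) * z 5

/-- A `2`-cochain on `ℤ⁶` with coboundary `c ∘ quarterTurn⁻¹ - c`, for `c` the
`invariantCocycle`. -/
def transgressionCochain (v : Fin 2 → Crystal.Lat 6) : ℤ :=
  let x := (v 0).toAdd; let y := (v 1).toAdd
  triangle (x 2) * -(y 4 + y 5) - x 1 * x 2 * y 4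

lemma d_invariantCocycle :
    inhomogeneousCochains.d (Rep.trivial ℤ (Crystal.Lat 6) ℤ) 3 invariantCocycle = 0 := by
  ext v
  obtain ⟨x, y, z, w, rfl⟩ : ∃ x y z w, v = ![x, y, z, w] :=
    ⟨v 0, v 1, v 2, v 3, by ext i; fin_cases i <;> rfl⟩
  refine (d_three_trivial_apply _ x y z w).trans ?_
  change _ = (0 : ℤ)
  simp only [invariantCocycle, Matrix.cons_val, toAdd_mul, Pi.add_apply]
  ring

lemma d_transgressionCochain :
    inhomogeneousCochains.d (Rep.trivial ℤ (Crystal.Lat 6) ℤ) 2 transgressionCochain =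
      (cochainsAct quarterTurnAction ℤ (.ofAdd 1)).f 3 invariantCocycle - invariantCocycle := by
  ext v
  obtain ⟨x, y, z, rfl⟩ : ∃ x y z, v = ![x, y, z] :=
    ⟨v 0, v 1, v 2, by ext i; fin_cases i <;> rfl⟩
  refine (d_two_trivial_apply _ x y z).trans ?_
  change _ = invariantCocycle (fun i => quarterTurnAction (.ofAdd 1)⁻¹ (![x, y, z] i)) -
    invariantCocycle ![x, y, z]
  simp only [transgressionCochain, invariantCocycle, quarterTurnAction_ofAdd_one_inv_apply,
    Matrix.cons_val, toAdd_mul, toAdd_ofAdd, Pi.add_apply, triangle_add]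
  ring

/-- The value of a biadditive map on the canonical element `∑ eᵢ ⊗ eᵢ*` of `P ⊗ P*`, where
`ℤ⁶ = P ⊕ P*`. -/
def canonicalValue (B : (Fin 6 → ℤ) → (Fin 6 → ℤ) → ℤ) : ℤ :=
  ∑ i : Fin 3, B (Pi.single (i.castAdd 3) 1) (Pi.single (i.natAdd 3) 1)

lemma canonicalValue_quarterTurn (B : (Fin 6 → ℤ) →+ (Fin 6 → ℤ) →+ ℤ) :
    canonicalValue (fun x y => B (quarterTurn x) (quarterTurn y)) =
      canonicalValue fun x y => B x y := by
  have h₀ : quarterTurn (Pi.single 0 1) = Pi.single 0 1 := by decide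
  have h₁ : quarterTurn (Pi.single 1 1) = Pi.single 0 1 + Pi.single 2 1 := by decide
  have h₂ : quarterTurn (Pi.single 2 1) = -Pi.single 1 1 := by decide
  have h₃ : quarterTurn (Pi.single 3 1) = Pi.single 3 1 - Pi.single 5 1 := by decide
  have h₄ : quarterTurn (Pi.single 4 1) = Pi.single 5 1 := by decide
  have h₅ : quarterTurn (Pi.single 5 1) = -Pi.single 4 1 := by decide
  simp only [canonicalValue, Fin.sum_univ_three, Fin.natAdd_eq_addNat, Fin.reduceCastAdd,
    Fin.reduceAddNat, h₀, h₁, h₂, h₃, h₄, h₅, map_add, map_sub, map_neg, AddMonoidHom.add_apply,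
    AddMonoidHom.neg_apply]
  ring

lemma canonicalValue_quarterTurn_pow (B : (Fin 6 → ℤ) →+ (Fin 6 → ℤ) →+ ℤ) (n : ℕ) :
    canonicalValue (fun x y => B ((quarterTurn ^ n) x) ((quarterTurn ^ n) y)) =
      canonicalValue fun x y => B x y := by
  induction n with
  | zero => rfl
  | succ n ih =>
    rw [← ih]
    let f : (Fin 6 → ℤ) →+ (Fin 6 → ℤ) := (quarterTurn ^ n).toLinearMap.toAddMonoidHom
    exact canonicalValue_quarterTurn ((B.comp f).compl₂ f)

lemma canonicalValue_alternation_cochainsNorm {f : (Fin 2 → Crystal.Lat 6) → ℤ}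
    (hf : inhomogeneousCochains.d (Rep.trivial ℤ (Crystal.Lat 6) ℤ) 2 f = 0) :
    canonicalValue (alternation ((cochainsNorm quarterTurnAction ℤ).f 2 f)) =
      4 * canonicalValue (alternation f) := by
  have hnorm : alternation ((cochainsNorm quarterTurnAction ℤ).f 2 f) = fun x y =>
      ∑ h : Multiplicative (ZMod 4), alternationHom f hf ((quarterTurn ^ h.toAdd.val) x)
        ((quarterTurn ^ h.toAdd.val) y) := by
    ext x y
    rw [alternation, cochainsNorm_f_apply, cochainsNorm_f_apply, ← Finset.sum_sub_distrib]
    exact Finset.sum_congr rfl fun h _ => congrArg₂ (fun v w => f v - f w)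
      (by ext i; fin_cases i <;> rfl) (by ext i; fin_cases i <;> rfl)
  calc _ = ∑ h : Multiplicative (ZMod 4), canonicalValue fun x y =>
        alternationHom f hf ((quarterTurn ^ h.toAdd.val) x) ((quarterTurn ^ h.toAdd.val) y) := by
        rw [hnorm]
        exact Finset.sum_comm
    _ = ∑ _ : Multiplicative (ZMod 4), canonicalValue (alternation f) :=
        Finset.sum_congr rfl fun _ _ => canonicalValue_quarterTurn_pow _ _
    _ = 4 * canonicalValue (alternation f) := by simp

lemma canonicalValue_alternation_cochainsNorm_transgressionCochain :
    canonicalValue (alternation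
      ((cochainsNorm quarterTurnAction ℤ).f 2 transgressionCochain)) = 2 := by
  have hnorm : alternation ((cochainsNorm quarterTurnAction ℤ).f 2 transgressionCochain) =
      alternation fun v => ∑ h, transgressionCochain fun i => quarterTurnAction h (v i) :=
    congrArg alternation (funext (cochainsNorm_f_apply _ _ _))
  rw [hnorm]
  decide +kernel

lemma cocycleClass_cochainsNorm_transgressionCochain_notMem_range :
    cocycleClass _ (d_cochainsNorm_eq_zero d_transgressionCochain) ∉
      Set.range (cohomologyMap (cochainsNorm quarterTurnAction ℤ) 2) := by
  rintro ⟨x, hx⟩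
  obtain ⟨f, hf, rfl⟩ := exists_cocycleClass_eq x
  rw [cohomologyMap_cocycleClass] at hx
  have halt := congrArg canonicalValue (alternation_eq_of_cocycleClass_eq hx)
  rw [canonicalValue_alternation_cochainsNorm hf,
    canonicalValue_alternation_cochainsNorm_transgressionCochain] at halt
  omega

lemma zmod_mem_zpowers_ofAdd_one {m : ℕ} [NeZero m] (x : Multiplicative (ZMod m)) :
    x ∈ Subgroup.zpowers (Multiplicative.ofAdd (1 : ZMod m)) :=
  ⟨x.toAdd.val, by simp only [← ofAdd_zsmul]; simp⟩

end Example

end AGPP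

/-- Conjecture 5.2 of Adem–Ge–Pan–Petrosyan is false: there are a finite cyclic group `ℤ/m`,
a finitely generated `ℤ[ℤ/m]`-lattice `ℤ^n`, and a degree `k` such that
`H^k(ℤ^n ⋊ ℤ/m, ℤ)` is not isomorphic to `⊕_{i+j=k} H^i(ℤ/m, H^j(ℤ^n, ℤ))`. -/
theorem conjecture_AGPP_is_false :
    ∃ (m n : ℕ), 0 < m ∧
      ∃ (φ : Multiplicative (ZMod m) →* MulAut (Crystal.Lat n)) (k : ℕ),
        ¬ Nonempty
          ((groupCohomology
              (Rep.trivial ℤ (SemidirectProduct (Crystal.Lat n) (Multiplicative (ZMod m)) φ) ℤ) k)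
            ≃+ ((p : {p : ℕ × ℕ // p.1 + p.2 = k}) →
                groupCohomology
                  (Crystal.cohRep φ (1 : Representation ℤ (Multiplicative (ZMod m)) ℤ) p.1.2)
                  p.1.1)) := by
  have := AGPP.finite_groupCohomology_lat ℤ 6
  exact ⟨4, 6, by norm_num, AGPP.quarterTurnAction, 4,
    AGPP.not_nonempty_addEquiv_of_cocycleClass_cochainsNorm_notMem_range
      AGPP.zmod_mem_zpowers_ofAdd_one AGPP.d_invariantCocycle AGPP.d_transgressionCochain
      AGPP.cocycleClass_cochainsNorm_transgressionCochain_notMem_range⟩
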